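/- Consider on a space-time neighbourhood of a point y⁰ = (t⁰,x⁰) with 0 < x₃⁰ < 1 the system ∂_t ψ + Δψ + div(ψ v) = w₃, −Δw + A q = ψ A T, A* w = 0, where A f = R∇f for a constant orthogonal matrix R, A* z = −div(Rᵗ z), and v, T belong to C([−t₀,t₀], H³). Then for any smooth function σ(t,x) defined near y⁰ with σ(y⁰) = 0 and ∇_x σ(y⁰) ≠ 0, there are ε, r ∈ (0,1) with the following property: if ψ(t,x) = 0 for all (t,x) in {σ < 0} ∩ W_r(y⁰), then ψ ≡ 0 on B_ε(y⁰). Here W_r(y⁰) = {(t,x) : |t−t⁰| ≤ r², |x−x⁰| ≤ r} and B_ε(y⁰) = {(t,x) : |(t,x)−y⁰| ≤ ε}. -/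

import Mathlib

open Set MeasureTheory

noncomputable section

/-- Points of `ℝ³`. -/
abbrev E3 : Type := EuclideanSpace ℝ (Fin 3)

/-- The partial derivative `∂_i f` of a scalar function on `ℝ³`. -/
noncomputable def pd (i : Fin 3) (f : E3 → ℝ) (x : E3) : ℝ :=
  fderiv ℝ f x (EuclideanSpace.single i (1 : ℝ))

/-- The spatial partial derivative `∂_i f(t, ·)` of a function of `(t, x)`. -/
noncomputable def pdx (i : Fin 3) (f : ℝ × E3 → ℝ) (p : ℝ × E3) : ℝ :=
  pd i (fun y => f (p.1, y)) p.2

/-- The time derivative `∂_t f` of a function of `(t, x)`. -/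
noncomputable def pdt (f : ℝ × E3 → ℝ) (p : ℝ × E3) : ℝ :=
  deriv (fun s => f (s, p.2)) p.1

/-- The spatial Laplacian `Δf(t, ·)` of a function of `(t, x)`. -/
noncomputable def laplx (f : ℝ × E3 → ℝ) (p : ℝ × E3) : ℝ :=
  ∑ i : Fin 3, pd i (fun y => pd i (fun z => f (p.1, z)) y) p.2

/-- The parabolic cylinder `W_r(y⁰) = {(t,x) : |t−t⁰| ≤ r², |x−x⁰| ≤ r}`
(maximum norm in `x`). -/
def cylW (r : ℝ) (y0 : ℝ × E3) : Set (ℝ × E3) :=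
  {p | |p.1 - y0.1| ≤ r ^ 2 ∧ ∀ i : Fin 3, |p.2 i - y0.2 i| ≤ r}

/-- The ball `B_ε(y⁰) = {y : |y − y⁰| ≤ ε}` for the maximum norm on `ℝ⁴`. -/
def ballB (ε : ℝ) (y0 : ℝ × E3) : Set (ℝ × E3) :=
  {p | |p.1 - y0.1| ≤ ε ∧ ∀ i : Fin 3, |p.2 i - y0.2 i| ≤ ε}


/-! Directional derivatives on space-time -/

abbrev XT : Type := ℝ × E3

def et : XT := (1, 0)

def ex (i : Fin 3) : XT := (0, EuclideanSpace.single i (1 : ℝ))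

def DD (v : XT) (f : XT → ℝ) : XT → ℝ := fun p => fderiv ℝ f p v

abbrev Smo (f : XT → ℝ) : Prop := ContDiff ℝ (⊤ : ℕ∞) f

lemma Smo.dat {f : XT → ℝ} (hf : Smo f) (p : XT) : DifferentiableAt ℝ f p :=
  (hf.differentiable (by simp)) p

lemma Smo.DD {f : XT → ℝ} (hf : Smo f) (v : XT) : Smo (DD v f) := by
  have h : ContDiff ℝ (⊤ : ℕ∞) (fderiv ℝ f) := hf.fderiv_right (by simp)
  exact h.clm_apply contDiff_const

lemma smo_DD_on {f : XT → ℝ} {U : Set XT} (hU : IsOpen U)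
    (hf : ContDiffOn ℝ (⊤ : ℕ∞) f U) (v : XT) : ContDiffOn ℝ (⊤ : ℕ∞) (DD v f) U := by
  have h : ContDiffOn ℝ (⊤ : ℕ∞) (fderiv ℝ f) U := hf.fderiv_of_isOpen hU (by simp)
  exact h.clm_apply contDiffOn_const

lemma DD_mul_at {f g : XT → ℝ} {p : XT} (hf : DifferentiableAt ℝ f p)
    (hg : DifferentiableAt ℝ g p) (v : XT) :
    DD v (f * g) p = f p * DD v g p + DD v f p * g p := by
  unfold DD
  rw [fderiv_mul hf hg]
  simp; ring

lemma DD_add_at {f g : XT → ℝ} {p : XT} (hf : DifferentiableAt ℝ f p)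
    (hg : DifferentiableAt ℝ g p) (v : XT) :
    DD v (f + g) p = DD v f p + DD v g p := by
  unfold DD
  rw [fderiv_add hf hg]
  simp

lemma two_le_inf : (2 : WithTop ℕ∞) ≤ ((⊤ : ℕ∞) : WithTop ℕ∞) :=
  WithTop.coe_le_coe.2 (le_top : (2 : ℕ∞) ≤ ⊤)

lemma DD_comm_at {f : XT → ℝ} {p : XT} (hf : ContDiffAt ℝ (⊤ : ℕ∞) f p) (v w : XT) :
    DD v (DD w f) p = DD w (DD v f) p := by
  have hs : IsSymmSndFDerivAt ℝ f p := hf.isSymmSndFDerivAt (by simpa using two_le_inf)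
  have h1 : ContDiffAt ℝ 1 (fderiv ℝ f) p := hf.fderiv_right (by rw [one_add_one_eq_two]; exact two_le_inf)
  have h2 : DifferentiableAt ℝ (fderiv ℝ f) p := h1.differentiableAt (by simp)
  have key : ∀ a b : XT, DD a (DD b f) p = fderiv ℝ (fderiv ℝ f) p a b := by
    intro a b
    unfold DD
    rw [fderiv_clm_apply h2 (differentiableAt_const b)]
    simp
  rw [key, key]
  exact hs v w

lemma DD_mul {f g : XT → ℝ} (hf : Smo f) (hg : Smo g) (v : XT) :
    DD v (f * g) = f * DD v g + DD v f * g := by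
  funext p; exact DD_mul_at (hf.dat p) (hg.dat p) v

lemma DD_add {f g : XT → ℝ} (hf : Smo f) (hg : Smo g) (v : XT) :
    DD v (f + g) = DD v f + DD v g := by
  funext p; exact DD_add_at (hf.dat p) (hg.dat p) v

lemma DD_smul {f : XT → ℝ} (c : ℝ) (v : XT) (hf : Smo f) :
    DD v (c • f) = c • DD v f := by
  funext p
  unfold DD
  rw [fderiv_const_smul (hf.dat p)]
  simp

lemma DD_comm {f : XT → ℝ} (hf : Smo f) (v w : XT) : DD v (DD w f) = DD w (DD v f) := by
  funext p; exact DD_comm_at hf.contDiffAt v w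

lemma DD_congr {f g : XT → ℝ} {p : XT} (h : f =ᶠ[nhds p] g) (v : XT) :
    DD v f =ᶠ[nhds p] DD v g := by
  filter_upwards [h.eventuallyEq_nhds] with x hx
  unfold DD
  rw [hx.fderiv_eq]

lemma DD_hcs {f : XT → ℝ} (hf : HasCompactSupport f) (v : XT) : HasCompactSupport (DD v f) := by
  exact hf.fderiv_apply (𝕜 := ℝ) v

instance haarXT : (volume : Measure XT).IsAddHaarMeasure :=
  inferInstanceAs (((volume : Measure ℝ).prod (volume : Measure E3)).IsAddHaarMeasure)

lemma integral_DD {f : XT → ℝ} (hf : Smo f) (hc : HasCompactSupport f) (v : XT) :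
    ∫ p, DD v f p = 0 := by
  have h := integral_mul_fderiv_eq_neg_fderiv_mul_of_integrable (μ := (volume : Measure XT))
    (f := fun _ => (1 : ℝ)) (g := f) (v := v) (by simp)
    (by simpa [DD] using! ((hf.DD v).continuous.integrable_of_hasCompactSupport (DD_hcs hc v)))
    (by simpa using (hf.continuous.integrable_of_hasCompactSupport hc))
    (by fun_prop) (fun x _ => hf.dat x)
  simpa [DD] using h

/-- conjugated operator -/
def Pop (κ τ : ℝ) (a : Fin 3 → XT → ℝ) (b : XT → ℝ) (d : ℝ) (u : XT → ℝ) (p : XT) : ℝ :=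
  (∑ i, DD (ex i) (DD (ex i) u) p) - 2 * τ * (∑ i, a i p * DD (ex i) u p) - τ * d * u p
    + τ ^ 2 * (∑ i, a i p ^ 2) * u p + κ * (DD et u p - τ * b p * u p)

/-- Symmetric potential. -/
def Vf (κ τ : ℝ) (a : Fin 3 → XT → ℝ) (b : XT → ℝ) : XT → ℝ :=
  (τ ^ 2) • (a 0 * a 0 + a 1 * a 1 + a 2 * a 2) + (-(κ * τ)) • b

def Af (κ τ : ℝ) (a : Fin 3 → XT → ℝ) (d : ℝ) (u : XT → ℝ) : XT → ℝ :=
  κ • DD et u + (-(2 * τ)) • (a 0 * DD (ex 0) u + a 1 * DD (ex 1) u + a 2 * DD (ex 2) u)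
    + (-(τ * d)) • u

def Gf (u : XT → ℝ) : XT → ℝ :=
  DD (ex 0) u * DD (ex 0) u + DD (ex 1) u * DD (ex 1) u + DD (ex 2) u * DD (ex 2) u

/-- spatial flux -/
def Xf (κ τ : ℝ) (a : Fin 3 → XT → ℝ) (b : XT → ℝ) (d M : ℝ) (u : XT → ℝ) (j : Fin 3) :
    XT → ℝ :=
  (2 : ℝ) • (DD (ex j) u * Af κ τ a d u) + (2 * τ) • (a j * Gf u)
    + (-(2 * τ)) • (Vf κ τ a b * (a j * (u * u))) + (-(M * τ)) • (u * DD (ex j) u)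

def Xt (κ τ : ℝ) (a : Fin 3 → XT → ℝ) (b : XT → ℝ) (u : XT → ℝ) : XT → ℝ :=
  (-κ) • Gf u + κ • (Vf κ τ a b * (u * u))

lemma Smo.mul' {f g : XT → ℝ} (hf : Smo f) (hg : Smo g) : Smo (f * g) := ContDiff.mul hf hg
lemma Smo.add' {f g : XT → ℝ} (hf : Smo f) (hg : Smo g) : Smo (f + g) := ContDiff.add hf hg
lemma Smo.smul' {f : XT → ℝ} (c : ℝ) (hf : Smo f) : Smo (c • f) := contDiff_const.smul hf

section carl
variable {κ τ d M : ℝ} {a : Fin 3 → XT → ℝ} {b u : XT → ℝ}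

lemma Vf_smo (ha : ∀ i, Smo (a i)) (hb : Smo b) : Smo (Vf κ τ a b) := by
  unfold Vf
  exact (Smo.smul' _ ((((ha 0).mul' (ha 0)).add' ((ha 1).mul' (ha 1))).add'
    ((ha 2).mul' (ha 2)))).add' (Smo.smul' _ hb)

lemma Af_smo (ha : ∀ i, Smo (a i)) (hu : Smo u) : Smo (Af κ τ a d u) := by
  unfold Af
  exact ((Smo.smul' _ (hu.DD _)).add' (Smo.smul' _ ((((ha 0).mul' (hu.DD _)).add'
    ((ha 1).mul' (hu.DD _))).add' ((ha 2).mul' (hu.DD _))))).add' (Smo.smul' _ hu)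

lemma Gf_smo (hu : Smo u) : Smo (Gf u) := by
  unfold Gf
  exact (((hu.DD _).mul' (hu.DD _)).add' ((hu.DD _).mul' (hu.DD _))).add'
    ((hu.DD _).mul' (hu.DD _))

lemma DD_Vf (ha : ∀ i, Smo (a i)) (hb : Smo b) (v p : XT) :
    DD v (Vf κ τ a b) p = τ ^ 2 * (2 * (a 0 p * DD v (a 0) p + a 1 p * DD v (a 1) p
      + a 2 p * DD v (a 2) p)) - κ * τ * DD v b p := by
  have h := fun i => (ha i).mul' (ha i)
  unfold Vf
  rw [DD_add (Smo.smul' _ (((h 0).add' (h 1)).add' (h 2))) (Smo.smul' _ hb),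
    DD_smul _ _ (((h 0).add' (h 1)).add' (h 2)), DD_smul _ _ hb,
    DD_add ((h 0).add' (h 1)) (h 2), DD_add (h 0) (h 1),
    DD_mul (ha 0) (ha 0), DD_mul (ha 1) (ha 1), DD_mul (ha 2) (ha 2)]
  simp
  ring

lemma DD_Gf (hu : Smo u) (v p : XT) :
    DD v (Gf u) p = 2 * (DD (ex 0) u p * DD v (DD (ex 0) u) p
      + DD (ex 1) u p * DD v (DD (ex 1) u) p + DD (ex 2) u p * DD v (DD (ex 2) u) p) := by
  have h := fun i => (hu.DD (ex i)).mul' (hu.DD (ex i))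
  unfold Gf
  rw [DD_add ((h 0).add' (h 1)) (h 2), DD_add (h 0) (h 1),
    DD_mul (hu.DD _) (hu.DD _), DD_mul (hu.DD _) (hu.DD _), DD_mul (hu.DD _) (hu.DD _)]
  simp
  ring

lemma DD_Af (ha : ∀ i, Smo (a i)) (hu : Smo u) (v p : XT) :
    DD v (Af κ τ a d u) p = κ * DD v (DD et u) p
      - 2 * τ * (a 0 p * DD v (DD (ex 0) u) p + DD v (a 0) p * DD (ex 0) u p
        + (a 1 p * DD v (DD (ex 1) u) p + DD v (a 1) p * DD (ex 1) u p)
        + (a 2 p * DD v (DD (ex 2) u) p + DD v (a 2) p * DD (ex 2) u p))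
      - τ * d * DD v u p := by
  have h := fun i => (ha i).mul' (hu.DD (ex i))
  have h3 := ((h 0).add' (h 1)).add' (h 2)
  unfold Af
  rw [DD_add ((Smo.smul' _ (hu.DD _)).add' (Smo.smul' _ h3)) (Smo.smul' _ hu),
    DD_add (Smo.smul' _ (hu.DD _)) (Smo.smul' _ h3),
    DD_smul _ _ (hu.DD _), DD_smul _ _ h3, DD_smul _ _ hu,
    DD_add ((h 0).add' (h 1)) (h 2), DD_add (h 0) (h 1),
    DD_mul (ha 0) (hu.DD _), DD_mul (ha 1) (hu.DD _), DD_mul (ha 2) (hu.DD _)]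
  simp
  ring

lemma Xf_smo (ha : ∀ i, Smo (a i)) (hb : Smo b) (hu : Smo u) (j : Fin 3) :
    Smo (Xf κ τ a b d M u j) := by
  unfold Xf
  exact (((Smo.smul' _ ((hu.DD _).mul' (Af_smo ha hu))).add' (Smo.smul' _ ((ha j).mul'
    (Gf_smo hu)))).add' (Smo.smul' _ ((Vf_smo ha hb).mul' ((ha j).mul' (hu.mul' hu))))).add'
    (Smo.smul' _ (hu.mul' (hu.DD _)))

lemma Xt_smo (ha : ∀ i, Smo (a i)) (hb : Smo b) (hu : Smo u) :
    Smo (Xt κ τ a b u) := by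
  unfold Xt
  exact (Smo.smul' _ (Gf_smo hu)).add' (Smo.smul' _ ((Vf_smo ha hb).mul' (hu.mul' hu)))

lemma DD_Xf (ha : ∀ i, Smo (a i)) (hb : Smo b) (hu : Smo u) (j : Fin 3) (v p : XT) :
    DD v (Xf κ τ a b d M u j) p =
      2 * (DD (ex j) u p * DD v (Af κ τ a d u) p + DD v (DD (ex j) u) p * Af κ τ a d u p)
      + 2 * τ * (a j p * DD v (Gf u) p + DD v (a j) p * Gf u p)
      - 2 * τ * (Vf κ τ a b p * (a j p * (2 * u p * DD v u p) + DD v (a j) p * (u p * u p))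
          + DD v (Vf κ τ a b) p * (a j p * (u p * u p)))
      - M * τ * (u p * DD v (DD (ex j) u) p + DD v u p * DD (ex j) u p) := by
  have hA : Smo (Af κ τ a d u) := Af_smo ha hu
  have hV : Smo (Vf κ τ a b) := Vf_smo ha hb
  have hG := Gf_smo hu
  have h1 := (hu.DD (ex j)).mul' hA
  have h2 := (ha j).mul' hG
  have h3 := hV.mul' ((ha j).mul' (hu.mul' hu))
  have h4 := hu.mul' (hu.DD (ex j))
  unfold Xf
  rw [DD_add (((Smo.smul' _ h1).add' (Smo.smul' _ h2)).add' (Smo.smul' _ h3)) (Smo.smul' _ h4),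
    DD_add ((Smo.smul' _ h1).add' (Smo.smul' _ h2)) (Smo.smul' _ h3),
    DD_add (Smo.smul' _ h1) (Smo.smul' _ h2), DD_smul _ _ h1, DD_smul _ _ h2, DD_smul _ _ h3,
    DD_smul _ _ h4, DD_mul (hu.DD _) hA, DD_mul (ha j) hG, DD_mul hV ((ha j).mul' (hu.mul' hu)),
    DD_mul (ha j) (hu.mul' hu), DD_mul hu hu, DD_mul hu (hu.DD _)]
  simp
  ring

lemma DD_Xt (ha : ∀ i, Smo (a i)) (hb : Smo b) (hu : Smo u) (v p : XT) :
    DD v (Xt κ τ a b u) p = - κ * DD v (Gf u) p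
      + κ * (Vf κ τ a b p * (2 * u p * DD v u p) + DD v (Vf κ τ a b) p * (u p * u p)) := by
  have hV : Smo (Vf κ τ a b) := Vf_smo ha hb
  have hG := Gf_smo hu
  have h3 := hV.mul' (hu.mul' hu)
  unfold Xt
  rw [DD_add (Smo.smul' _ hG) (Smo.smul' _ h3), DD_smul _ _ hG, DD_smul _ _ h3,
    DD_mul hV (hu.mul' hu), DD_mul hu hu]
  simp
  ring

/-- Pointwise Carleman identity. -/
lemma carl_id (ha : ∀ i, Smo (a i)) (hb : Smo b) (hu : Smo u)
    (H : Fin 3 → Fin 3 → ℝ) (h : Fin 3 → ℝ) (ht : ℝ)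
    (hH : ∀ i j p, DD (ex j) (a i) p = H i j) (hHs : ∀ i j, H i j = H j i)
    (hh : ∀ i p, DD et (a i) p = h i) (hh' : ∀ i p, DD (ex i) b p = h i)
    (htt : ∀ p, DD et b p = ht) (hd : d = H 0 0 + H 1 1 + H 2 2) (p : XT) :
    ∃ S A : ℝ, Pop κ τ a b d u p = S + A ∧
    (Pop κ τ a b d u p) ^ 2 = S ^ 2 + A ^ 2 + M * τ * u p * S
      + (DD (ex 0) (Xf κ τ a b d M u 0) p + DD (ex 1) (Xf κ τ a b d M u 1) p
        + DD (ex 2) (Xf κ τ a b d M u 2) p + DD et (Xt κ τ a b u) p)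
      + 4 * τ * (∑ i, ∑ j, H i j * DD (ex i) u p * DD (ex j) u p)
      + M * τ * (∑ i, DD (ex i) u p ^ 2)
      + (τ ^ 3 * (4 * (∑ i, ∑ j, H i j * a i p * a j p) - M * ∑ i, a i p ^ 2)
          - τ ^ 2 * κ * (4 * (∑ i, h i * a i p) - M * b p) + κ ^ 2 * τ * ht) * u p ^ 2 := by
  refine ⟨(∑ i, DD (ex i) (DD (ex i) u) p) + Vf κ τ a b p * u p, Af κ τ a d u p, ?_, ?_⟩
  · simp [Pop, Vf, Af, Fin.sum_univ_three]; ring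
  · have e10 := congrFun (DD_comm hu (ex 1) (ex 0)) p
    have e20 := congrFun (DD_comm hu (ex 2) (ex 0)) p
    have e21 := congrFun (DD_comm hu (ex 2) (ex 1)) p
    have et0 := congrFun (DD_comm hu et (ex 0)) p
    have et1 := congrFun (DD_comm hu et (ex 1)) p
    have et2 := congrFun (DD_comm hu et (ex 2)) p
    simp only [DD_Xf ha hb hu, DD_Xt ha hb hu, DD_Af ha hu, DD_Gf hu, DD_Vf ha hb, hH, hh, hh',
      htt, hd, Fin.sum_univ_three, e10, e20, e21, et0, et1, et2, hHs 1 0, hHs 2 0, hHs 2 1]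
    simp only [Pop, Vf, Af, Gf, Fin.sum_univ_three, Pi.add_apply, Pi.mul_apply, Pi.smul_apply,
      smul_eq_mul]
    ring

end carl

lemma DD_zero_off {u : XT → ℝ} {p : XT} (hp : p ∉ tsupport u) (v : XT) : DD v u p = 0 := by
  have h : u =ᶠ[nhds p] 0 := notMem_tsupport_iff_eventuallyEq.1 hp
  have h2 := (DD_congr h v).eq_of_nhds
  rw [h2]; simp [DD]

lemma DD_off {u : XT → ℝ} {p : XT} (hp : p ∉ tsupport u) (v : XT) : p ∉ tsupport (DD v u) :=
  fun h => hp (tsupport_fderiv_apply_subset ℝ v h)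

lemma off_zero {u : XT → ℝ} {p : XT} (hp : p ∉ tsupport u) : u p = 0 := image_eq_zero_of_notMem_tsupport hp

lemma Pop_cont {κ τ d : ℝ} {a : Fin 3 → XT → ℝ} {b u : XT → ℝ} (ha : ∀ i, Smo (a i))
    (hb : Smo b) (hu : Smo u) : Continuous (Pop κ τ a b d u) := by
  have h1 := fun v => (hu.DD v).continuous
  have h2 := fun v w => ((hu.DD v).DD w).continuous
  have h3 := fun i => (ha i).continuous
  have h4 := hb.continuous
  have h5 := hu.continuous
  unfold Pop
  fun_prop

lemma carleman {a : Fin 3 → XT → ℝ} {b : XT → ℝ} {d : ℝ}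
    (ha : ∀ i, Smo (a i)) (hb : Smo b)
    (n : Fin 3 → ℝ) (K C : ℝ) (hK : 0 ≤ K)
    (H : Fin 3 → Fin 3 → ℝ) (h : Fin 3 → ℝ) (ht : ℝ)
    (hHe : ∀ i j, H i j = K * n i * n j - if i = j then 2 * C else 0)
    (hH : ∀ i j p, DD (ex j) (a i) p = H i j)
    (hh : ∀ i p, DD et (a i) p = h i) (hh' : ∀ i p, DD (ex i) b p = h i)
    (htt : ∀ p, DD et b p = ht) (hd : d = H 0 0 + H 1 1 + H 2 2)
    (N : Set XT) (c0 B : ℝ) (hc0 : 0 < c0)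
    (hN : ∀ p ∈ N, c0 ≤ 4 * (∑ i, ∑ j, H i j * a i p * a j p) - (8 * C + 1) * ∑ i, a i p ^ 2)
    (hB : ∀ p ∈ N, |4 * (∑ i, h i * a i p) - (8 * C + 1) * b p| ≤ B) :
    ∃ τ0 : ℝ, 1 ≤ τ0 ∧ ∀ τ, τ0 ≤ τ → ∀ κ : ℝ, 0 ≤ κ → κ ≤ 1 → ∀ u : XT → ℝ, Smo u →
      HasCompactSupport u → (∀ p, p ∈ N ∨ u p = 0) →
      ∫ p, (τ * (∑ i, DD (ex i) u p ^ 2) + τ ^ 3 * (c0 / 2) * u p ^ 2)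
        ≤ ∫ p, (Pop κ τ a b d u p) ^ 2 := by
  have hHs : ∀ i j, H i j = H j i := by
    intro i j; rw [hHe, hHe]
    rcases eq_or_ne i j with rfl | hij
    · rfl
    · rw [if_neg hij, if_neg hij.symm]; ring
  set M := 8 * C + 1 with hM
  refine ⟨max 1 (2 / c0 * (|B| + |ht| + M ^ 2 / 4)), le_max_left _ _, ?_⟩
  intro τ hτ κ hκ0 hκ1 u hu huc huN
  have hτ1 : 1 ≤ τ := (le_max_left _ _).trans hτ
  have hτ2 : |B| + |ht| + M ^ 2 / 4 ≤ τ * (c0 / 2) := by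
    have := (le_max_right _ _).trans hτ
    have h2 : (2 / c0 * (|B| + |ht| + M ^ 2 / 4)) * (c0 / 2) ≤ τ * (c0 / 2) := by gcongr
    have h3 : (2 / c0 * (|B| + |ht| + M ^ 2 / 4)) * (c0 / 2) = |B| + |ht| + M ^ 2 / 4 := by
      field_simp
    linarith
  set Dv : XT → ℝ := fun p => DD (ex 0) (Xf κ τ a b d M u 0) p + DD (ex 1) (Xf κ τ a b d M u 1) p
        + DD (ex 2) (Xf κ τ a b d M u 2) p + DD et (Xt κ τ a b u) p with hDv
  have hXs := fun j => Xf_smo (κ := κ) (τ := τ) (d := d) (M := M) ha hb hu j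
  have hTs := Xt_smo (κ := κ) (τ := τ) ha hb hu
  have hXc : ∀ j, HasCompactSupport (Xf κ τ a b d M u j) := fun j =>
    HasCompactSupport.intro huc (fun p hp => by
      simp [Xf, Gf, off_zero hp, DD_zero_off hp])
  have hTc : HasCompactSupport (Xt κ τ a b u) :=
    HasCompactSupport.intro huc (fun p hp => by
      simp [Xt, Gf, off_zero hp, DD_zero_off hp])
  have hXi : ∀ j v, Integrable (DD v (Xf κ τ a b d M u j)) := fun j v =>
    ((hXs j).DD v).continuous.integrable_of_hasCompactSupport (DD_hcs (hXc j) v)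
  have hTi : ∀ v, Integrable (DD v (Xt κ τ a b u)) := fun v =>
    (hTs.DD v).continuous.integrable_of_hasCompactSupport (DD_hcs hTc v)
  have hDi : Integrable Dv := (((hXi 0 _).add (hXi 1 _)).add (hXi 2 _)).add (hTi _)
  have hD0 : ∫ p, Dv p = 0 := by
    have e : Dv = DD (ex 0) (Xf κ τ a b d M u 0) + DD (ex 1) (Xf κ τ a b d M u 1)
        + DD (ex 2) (Xf κ τ a b d M u 2) + DD et (Xt κ τ a b u) := rfl
    rw [e, integral_add' (((hXi 0 _).add (hXi 1 _)).add (hXi 2 _)) (hTi _),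
      integral_add' ((hXi 0 _).add (hXi 1 _)) (hXi 2 _), integral_add' (hXi 0 _) (hXi 1 _),
      integral_DD (hXs 0) (hXc 0), integral_DD (hXs 1) (hXc 1), integral_DD (hXs 2) (hXc 2),
      integral_DD hTs hTc]
    simp
  have hPi : Integrable (fun p => (Pop κ τ a b d u p) ^ 2) := by
    refine Continuous.integrable_of_hasCompactSupport ((Pop_cont ha hb hu).pow 2) ?_
    refine HasCompactSupport.intro huc (fun p hp => ?_)
    simp [Pop, off_zero hp, DD_zero_off hp, DD_zero_off (DD_off hp _)]
  have hLi : Integrable (fun p => τ * (∑ i, DD (ex i) u p ^ 2) + τ ^ 3 * (c0 / 2) * u p ^ 2) := by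
    refine Continuous.integrable_of_hasCompactSupport ?_ ?_
    · have h1 := fun v => (hu.DD v).continuous
      have h5 := hu.continuous
      fun_prop
    · refine HasCompactSupport.intro huc (fun p hp => ?_)
      simp [off_zero hp, DD_zero_off hp]
  have key : ∀ p, τ * (∑ i, DD (ex i) u p ^ 2) + τ ^ 3 * (c0 / 2) * u p ^ 2
      ≤ (Pop κ τ a b d u p) ^ 2 - Dv p := by
    intro p
    obtain ⟨S, A, -, e⟩ := carl_id (κ := κ) (τ := τ) (M := M) ha hb hu H h ht hH hHs hh hh' htt hd p
    rw [e, hDv]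
    have q1 : 4 * τ * (∑ i, ∑ j, H i j * DD (ex i) u p * DD (ex j) u p)
        = 4 * τ * K * (∑ i, n i * DD (ex i) u p) ^ 2
          - 8 * C * τ * (∑ i, DD (ex i) u p ^ 2) := by
      simp [hHe, Fin.sum_univ_three]; ring
    have q2 : 0 ≤ 4 * τ * K * (∑ i, n i * DD (ex i) u p) ^ 2 := by positivity
    have q3 : -(M ^ 2 * τ ^ 2 / 4 * u p ^ 2) ≤ S ^ 2 + A ^ 2 + M * τ * u p * S := by
      nlinarith [sq_nonneg (S + M * τ * u p / 2), sq_nonneg A]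
    have q4 : (τ ^ 3 * (c0 / 2) + M ^ 2 * τ ^ 2 / 4) * u p ^ 2 ≤
        (τ ^ 3 * (4 * (∑ i, ∑ j, H i j * a i p * a j p) - M * ∑ i, a i p ^ 2)
          - τ ^ 2 * κ * (4 * (∑ i, h i * a i p) - M * b p) + κ ^ 2 * τ * ht) * u p ^ 2 := by
      rcases huN p with hp | hp
      · refine mul_le_mul_of_nonneg_right ?_ (sq_nonneg _)
        have r1 := hN p hp
        have r2 := hB p hp
        have r3 : τ ^ 3 * c0 ≤ τ ^ 3 * (4 * (∑ i, ∑ j, H i j * a i p * a j p)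
            - M * ∑ i, a i p ^ 2) := by gcongr
        have r4 : κ * (4 * (∑ i, h i * a i p) - M * b p) ≤ |B| := by
          have := (abs_le.1 r2).2
          have hBB := le_abs_self B
          calc κ * (4 * (∑ i, h i * a i p) - M * b p) ≤ κ * |B| := by gcongr; linarith
            _ ≤ 1 * |B| := by gcongr
            _ = |B| := one_mul _
        have r5 : τ ^ 2 * (κ * (4 * (∑ i, h i * a i p) - M * b p)) ≤ τ ^ 2 * |B| := by gcongr
        have r6 : -(τ ^ 2 * |ht|) ≤ κ ^ 2 * τ * ht := by
          have : κ ^ 2 * τ * (-ht) ≤ 1 * τ ^ 2 * |ht| := by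
            calc κ ^ 2 * τ * (-ht) ≤ κ ^ 2 * τ * |ht| := by gcongr; exact neg_le_abs ht
              _ ≤ 1 * τ ^ 2 * |ht| := by
                gcongr
                · exact pow_le_one₀ hκ0 hκ1
                · exact le_self_pow₀ hτ1 (by norm_num)
          linarith
        have r7 : τ ^ 2 * (|B| + |ht| + M ^ 2 / 4) ≤ τ ^ 2 * (τ * (c0 / 2)) := by gcongr
        generalize 4 * (∑ i, ∑ j, H i j * a i p * a j p) - M * ∑ i, a i p ^ 2 = x at *
        generalize 4 * (∑ i, h i * a i p) - M * b p = y at *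
        clear r1 r2 r4 e q1 q2 q3
        linarith
      · rw [hp]; simp
    have q5 : M * τ * (∑ i, DD (ex i) u p ^ 2) = 8 * C * τ * (∑ i, DD (ex i) u p ^ 2)
      + τ * (∑ i, DD (ex i) u p ^ 2) := by rw [hM]; ring
    rw [q1, q5]
    linarith
  calc _ ≤ ∫ p, ((Pop κ τ a b d u p) ^ 2 - Dv p) := integral_mono hLi (hPi.sub hDi) key
    _ = _ := by rw [integral_sub hPi hDi, hD0, sub_zero]

/-- Weighted Carleman. -/
lemma conj {φ g : XT → ℝ} {a : Fin 3 → XT → ℝ} {b : XT → ℝ} {d κ τ : ℝ}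
    (hφ : Smo φ) (hg : Smo g) (ha : ∀ i, DD (ex i) φ = a i) (hb : DD et φ = b)
    (H : Fin 3 → Fin 3 → ℝ)
    (hH : ∀ i j p, DD (ex j) (a i) p = H i j) (hd : d = H 0 0 + H 1 1 + H 2 2)
    (u : XT → ℝ) (hu : u = (fun p => Real.exp (τ * φ p)) * g) (p : XT) :
    Smo u ∧ (∀ v, DD v u p = Real.exp (τ * φ p) * (DD v g p + τ * DD v φ p * g p)) ∧
    Pop κ τ a b d u p = Real.exp (τ * φ p) *
      ((∑ i, DD (ex i) (DD (ex i) g) p) + κ * DD et g p) := by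
  set E : XT → ℝ := fun p => Real.exp (τ * φ p) with hE
  have hEs : Smo E := (contDiff_const.mul hφ).exp
  have hus : Smo u := hu ▸ hEs.mul' hg
  have hDE : ∀ v, DD v E = E * (τ • DD v φ) := by
    intro v; funext p
    have h1 : HasFDerivAt φ (fderiv ℝ φ p) p := (hφ.dat p).hasFDerivAt
    have h2 := (h1.const_mul τ).exp
    simp only [DD, hE]
    rw [h2.fderiv]
    simp [DD]
  have h1 : ∀ v, DD v u = E * (DD v g + (τ • DD v φ) * g) := by
    intro v
    rw [hu, DD_mul hEs hg, hDE]; ring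
  have h2 : ∀ i, DD (ex i) (DD (ex i) u) p = E p * (DD (ex i) (DD (ex i) g) p
      + 2 * τ * a i p * DD (ex i) g p + τ * H i i * g p + τ ^ 2 * a i p ^ 2 * g p) := by
    intro i
    have has : Smo (a i) := ha i ▸ hφ.DD _
    rw [h1, DD_mul hEs ((hg.DD _).add' ((Smo.smul' _ (hφ.DD _)).mul' hg)), hDE,
      DD_add (hg.DD _) ((Smo.smul' _ (hφ.DD _)).mul' hg), DD_mul (Smo.smul' _ (hφ.DD _)) hg,
      DD_smul _ _ (hφ.DD _), ha]
    simp [hH]; ring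
  refine ⟨hus, fun v => ?_, ?_⟩
  · rw [h1]; simp [hE, mul_assoc]
  · simp only [Pop, h2, Fin.sum_univ_three]
    simp only [h1, ha, hb, hd]
    simp only [hu, Pi.mul_apply, Pi.add_apply, Pi.smul_apply, smul_eq_mul]
    change _ = E p * _
    ring

lemma taylor2 {σf : XT → ℝ} (hσ : Smo σf) (y0 : XT) (h0 : σf y0 = 0) :
    ∃ C : ℝ, 0 ≤ C ∧ ∀ᶠ p in nhds y0, |σf p - fderiv ℝ σf y0 (p - y0)| ≤ C * ‖p - y0‖ ^ 2 := by
  have h1 : ContDiff ℝ (⊤ : ℕ∞) (fderiv ℝ σf) := hσ.fderiv_right (by simp)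
  obtain ⟨C, t, ht, hC⟩ := (h1.contDiffAt (x := y0)).of_le
    (n := ((⊤ : ℕ∞) : WithTop ℕ∞)) (m := 1) (le_trans one_le_two two_le_inf) |>.exists_lipschitzOnWith
  obtain ⟨δ, hδ, hball⟩ := Metric.mem_nhds_iff.1 ht
  refine ⟨C, C.2, ?_⟩
  filter_upwards [Metric.ball_mem_nhds y0 hδ] with p hp
  have hsub : Metric.closedBall y0 (dist p y0) ⊆ t := fun x hx =>
    hball (Metric.mem_ball.2 (lt_of_le_of_lt (Metric.mem_closedBall.1 hx) (Metric.mem_ball.1 hp)))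
  have := (convex_closedBall y0 (dist p y0)).norm_image_sub_le_of_norm_fderiv_le' (𝕜 := ℝ)
    (f := σf) (φ := fderiv ℝ σf y0) (C := C * ‖p - y0‖) (x := y0) (y := p)
    (fun x _ => hσ.dat x) (fun x hx => by
      have := hC.norm_sub_le (hsub hx) (mem_of_mem_nhds ht)
      refine this.trans ?_
      gcongr
      rw [← dist_eq_norm, ← dist_eq_norm]; exact hx)
    (Metric.mem_closedBall_self dist_nonneg) (Metric.mem_closedBall.2 le_rfl)
  rw [h0, sub_zero, Real.norm_eq_abs] at this
  linarith

def Lt : XT →L[ℝ] ℝ := ContinuousLinearMap.fst ℝ ℝ E3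
def Lx (i : Fin 3) : XT →L[ℝ] ℝ :=
  (EuclideanSpace.proj (𝕜 := ℝ) i).comp (ContinuousLinearMap.snd ℝ ℝ E3)

lemma Lt_ex (i : Fin 3) : Lt (ex i) = 0 := by simp [Lt, ex]
lemma Lt_et : Lt et = 1 := by simp [Lt, et]
lemma Lx_et (i : Fin 3) : Lx i et = 0 := by simp [Lx, et]
lemma Lx_ex (i j : Fin 3) : Lx i (ex j) = if i = j then 1 else 0 := by
  simp [Lx, ex]

lemma DD_aff (c : ℝ) (L : XT →L[ℝ] ℝ) (y0 v : XT) :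
    DD v (fun p => c + L (p - y0)) = fun _ => L v := by
  funext p
  have h : HasFDerivAt (fun p => c + L (p - y0)) L p :=
    ((L.hasFDerivAt (x := p - y0)).comp p ((hasFDerivAt_id p).sub_const y0)).const_add c
  simp only [DD]
  rw [h.fderiv]

lemma smo_aff (c : ℝ) (L : XT →L[ℝ] ℝ) (y0 : XT) : Smo (fun p => c + L (p - y0)) := by
  unfold Smo; fun_prop

lemma norm_le_Q (p : XT) : ‖p‖ ^ 2 ≤ Lt p ^ 2 + ∑ i, Lx i p ^ 2 := by
  have h2 : ‖p.2‖ ^ 2 = ∑ i, Lx i p ^ 2 := by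
    rw [EuclideanSpace.real_norm_sq_eq]; rfl
  have h1 : ‖p.1‖ ^ 2 = Lt p ^ 2 := by simp [Lt]
  rw [← h1, ← h2, Prod.norm_def]
  rcases max_cases ‖p.1‖ ‖p.2‖ with h | h <;> rw [h.1] <;> nlinarith [sq_nonneg ‖p.1‖, sq_nonneg ‖p.2‖]

lemma carleman_w {σf : XT → ℝ} (hσ : Smo σf) (y0 : XT) (h0 : σf y0 = 0)
    (hgrad : ∃ i, DD (ex i) σf y0 ≠ 0) :
    ∃ φ : XT → ℝ, Smo φ ∧ φ y0 = 0 ∧ (∀ᶠ p in nhds y0, 0 ≤ σf p → φ p ≤ - ‖p - y0‖ ^ 2) ∧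
    ∃ N ∈ nhds y0, ∃ c > 0, ∃ τ0 : ℝ, 1 ≤ τ0 ∧ ∀ τ, τ0 ≤ τ → ∀ κ : ℝ, 0 ≤ κ → κ ≤ 1 →
      ∀ g : XT → ℝ, Smo g → HasCompactSupport g → (∀ p, p ∈ N ∨ g p = 0) →
      τ * ∫ p, Real.exp (τ * φ p) ^ 2 * (g p ^ 2 + ∑ i, DD (ex i) g p ^ 2)
        ≤ c * ∫ p, Real.exp (τ * φ p) ^ 2 *
          ((∑ i, DD (ex i) (DD (ex i) g) p) + κ * DD et g p) ^ 2 := by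
  obtain ⟨C1, hC1, hT⟩ := taylor2 hσ y0 h0
  set l : XT →L[ℝ] ℝ := fderiv ℝ σf y0 with hl
  set n : Fin 3 → ℝ := fun i => l (ex i) with hn
  set β : ℝ := l et with hβ
  set N2 : ℝ := ∑ i, n i ^ 2 with hN2
  have hN2pos : 0 < N2 := by
    obtain ⟨i, hi⟩ := hgrad
    have hi' : n i ≠ 0 := hi
    exact Finset.sum_pos' (fun i _ => sq_nonneg _) ⟨i, Finset.mem_univ _, by positivity⟩
  set C : ℝ := 2 * C1 + 1 with hC
  have hCpos : 0 < C := by positivity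
  set K : ℝ := (16 * C + 2) / (4 * N2) with hKd
  have hK : 0 < K := by positivity
  have hKN : 4 * K * N2 = 16 * C + 2 := by rw [hKd]; field_simp
  set φ : XT → ℝ := fun p => -l (p - y0) + K / 2 * (l (p - y0)) ^ 2
    - C * (Lt (p - y0) ^ 2 + ∑ i, Lx i (p - y0) ^ 2) with hφd
  have hφ : Smo φ := by unfold Smo; rw [hφd]; fun_prop
  have hDφ : ∀ v p, DD v φ p = -l v + K * l (p - y0) * l v
      - 2 * C * (Lt (p - y0) * Lt v + ∑ i, Lx i (p - y0) * Lx i v) := by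
    intro v p
    have hL : ∀ L : XT →L[ℝ] ℝ, HasFDerivAt (fun p => L (p - y0)) L p := fun L =>
      (L.hasFDerivAt (x := p - y0)).comp p ((hasFDerivAt_id p).sub_const y0)
    have h := (((hL l).neg).add (((hL l).pow 2).const_mul (K / 2))).sub
      ((((hL Lt).pow 2).add (((((hL (Lx 0)).pow 2).add ((hL (Lx 1)).pow 2)).add
        ((hL (Lx 2)).pow 2)))).const_mul C)
    have h' : HasFDerivAt φ _ p := h.congr_of_eventuallyEq (Filter.Eventually.of_forall fun q => by
      simp [hφd, Fin.sum_univ_three])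
    simp only [DD]
    rw [h'.fderiv]
    simp [Fin.sum_univ_three]
    ring
  set a : Fin 3 → XT → ℝ := fun i p => -n i + ((K * n i) • l - (2 * C) • Lx i) (p - y0) with had
  set b : XT → ℝ := fun p => -β + ((K * β) • l - (2 * C) • Lt) (p - y0) with hbd
  have ha : ∀ i, DD (ex i) φ = a i := by
    intro i; funext p
    rw [hDφ]
    simp [had, Lt_ex, Lx_ex, hn]; ring
  have hb : DD et φ = b := by
    funext p
    rw [hDφ]
    simp [hbd, Lt_et, Lx_et, hβ]; ring
  have has : ∀ i, Smo (a i) := fun i => smo_aff _ _ _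
  have hbs : Smo b := smo_aff _ _ _
  set H : Fin 3 → Fin 3 → ℝ := fun i j => K * n i * n j - if i = j then 2 * C else 0 with hHd
  have hH : ∀ i j p, DD (ex j) (a i) p = H i j := by
    intro i j p
    rw [had, DD_aff]
    simp [hHd, Lx_ex, hn]
  have hh : ∀ i p, DD et (a i) p = K * n i * β := by
    intro i p
    rw [had, DD_aff]; simp [Lx_et, hβ]
  have hh' : ∀ i p, DD (ex i) b p = K * n i * β := by
    intro i p
    rw [hbd, DD_aff]; simp [Lt_ex, hn]; ring
  have htt : ∀ p, DD et b p = K * β * β - 2 * C := by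
    intro p
    rw [hbd, DD_aff]; simp [Lt_et, hβ]
  have hac : ∀ i, Continuous (a i) := fun i => (has i).continuous
  have hbc : Continuous b := hbs.continuous
  set F1 : XT → ℝ := fun p => 4 * (∑ i, ∑ j, H i j * a i p * a j p)
    - (8 * C + 1) * ∑ i, a i p ^ 2 with hF1
  set F2 : XT → ℝ := fun p => |4 * (∑ i, (K * n i * β) * a i p) - (8 * C + 1) * b p| with hF2
  set F3 : XT → ℝ := fun p => ∑ i, a i p ^ 2 with hF3
  have hF1c : Continuous F1 := by fun_prop
  have hF2c : Continuous F2 := by fun_prop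
  have hF3c : Continuous F3 := by fun_prop
  have ha0 : ∀ i, a i y0 = - n i := by intro i; simp [had]
  have hF10 : F1 y0 = N2 := by
    have e1 : ∑ i, ∑ j, H i j * a i y0 * a j y0 = K * N2 ^ 2 - 2 * C * N2 := by
      simp [ha0, hHd, hN2, Fin.sum_univ_three]; ring
    have e2 : ∑ i, a i y0 ^ 2 = N2 := by simp [ha0, hN2]
    simp only [hF1]
    rw [e1, e2]
    linear_combination N2 * hKN
  have hE1 : ∀ᶠ p in nhds y0, N2 / 2 < F1 p :=
    hF1c.continuousAt.eventually (lt_mem_nhds (by rw [hF10]; linarith))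
  have hE2 : ∀ᶠ p in nhds y0, F2 p < F2 y0 + 1 :=
    hF2c.continuousAt.eventually (gt_mem_nhds (by linarith))
  have hE3 : ∀ᶠ p in nhds y0, F3 p < F3 y0 + 1 :=
    hF3c.continuousAt.eventually (gt_mem_nhds (by linarith))
  have hF30 : 0 ≤ F3 y0 := Finset.sum_nonneg fun i _ => sq_nonneg _
  obtain ⟨τ0, hτ0, hcarl⟩ := carleman has hbs n K C hK.le H (fun i => K * n i * β) _
    (fun i j => rfl) hH hh hh' htt rfl {p | N2 / 2 < F1 p ∧ F2 p < F2 y0 + 1 ∧ F3 p < F3 y0 + 1}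
    (N2 / 2) (F2 y0 + 1) (by positivity) (fun p hp => hp.1.le) (fun p hp => hp.2.1.le)
  refine ⟨φ, hφ, by simp [hφd], ?_, {p | N2 / 2 < F1 p ∧ F2 p < F2 y0 + 1 ∧ F3 p < F3 y0 + 1},
    hE1.and (hE2.and hE3), 2 + (1 + 2 * (F3 y0 + 1)) / (N2 / 2 / 2), by positivity, τ0, hτ0, ?_⟩
  · have hs : ∀ᶠ p in nhds y0, |K * l (p - y0)| < 1 := by
      have : Continuous fun p => |K * l (p - y0)| := by fun_prop
      exact this.continuousAt.eventually (gt_mem_nhds (by simp))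
    filter_upwards [hT, hs] with p hp1 hp2 hp3
    have q := norm_le_Q (p - y0)
    simp only [hφd]
    set s := l (p - y0)
    set Q := Lt (p - y0) ^ 2 + ∑ i, Lx i (p - y0) ^ 2
    set r := ‖p - y0‖ ^ 2
    have hr : 0 ≤ r := sq_nonneg _
    have k1 : -s ≤ C1 * r := by linarith [(abs_le.1 hp1).2]
    have k2 := abs_lt.1 hp2
    have k3 : -s + K / 2 * s ^ 2 ≤ 2 * C1 * r := by
      have e : -s + K / 2 * s ^ 2 = -s * (1 - K * s / 2) := by ring
      rw [e]
      rcases le_total 0 s with hs0 | hs0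
      · have : 0 ≤ s * (1 - K * s / 2) := mul_nonneg hs0 (by linarith [k2.2])
        have : 0 ≤ 2 * C1 * r := by positivity
        linarith
      · have h1 : -s * (1 - K * s / 2) ≤ -s * 2 := by
          apply mul_le_mul_of_nonneg_left _ (by linarith)
          linarith [k2.1]
        linarith
    have k4 : C * r ≤ C * Q := by gcongr
    rw [hC] at k4 ⊢
    linarith
  · intro τ hτ κ hκ0 hκ1 g hg hgc hgN
    set u : XT → ℝ := (fun p => Real.exp (τ * φ p)) * g with hu
    have hc := fun p => conj (κ := κ) hφ hg ha hb H hH rfl u hu p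
    have hus : Smo u := (hc y0).1
    have huc : HasCompactSupport u := hgc.mul_left
    have main := hcarl τ hτ κ hκ0 hκ1 u hus huc (fun p => (hgN p).imp id (fun h => by simp [hu, h]))
    have hτ1 : 1 ≤ τ := hτ0.trans hτ
    have hR : ∫ p, (Pop κ τ a b (H 0 0 + H 1 1 + H 2 2) u p) ^ 2 = ∫ p, Real.exp (τ * φ p) ^ 2 *
          ((∑ i, DD (ex i) (DD (ex i) g) p) + κ * DD et g p) ^ 2 := by
      congr 1; funext p; rw [(hc p).2.2, mul_pow]
    rw [hR] at main
    set cc := 2 + (1 + 2 * (F3 y0 + 1)) / (N2 / 2 / 2) with hcc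
    have hccpos : 0 < cc := by positivity
    refine le_trans ?_ (mul_le_mul_of_nonneg_left main hccpos.le)
    rw [← integral_const_mul, ← integral_const_mul]
    have h1 := fun v => (hus.DD v).continuous
    have h2 := hus.continuous
    have h3 := fun v => (hg.DD v).continuous
    have h4 := hg.continuous
    have h5 := hφ.continuous
    refine integral_mono ?_ ?_ ?_
    · refine Continuous.integrable_of_hasCompactSupport (by fun_prop) ?_
      refine HasCompactSupport.intro hgc (fun p hp => ?_)
      simp [off_zero hp, DD_zero_off hp]
    · refine Continuous.integrable_of_hasCompactSupport (by fun_prop) ?_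
      refine HasCompactSupport.intro huc (fun p hp => ?_)
      simp [off_zero hp, DD_zero_off hp]
    · intro p
      simp only
      have hup : u p = Real.exp (τ * φ p) * g p := rfl
      have hgi : ∀ i, Real.exp (τ * φ p) * DD (ex i) g p = DD (ex i) u p - τ * a i p * u p := by
        intro i; rw [(hc p).2.1, ha, hup]; ring
      have e1 : Real.exp (τ * φ p) ^ 2 * (g p ^ 2 + ∑ i, DD (ex i) g p ^ 2)
          = u p ^ 2 + ∑ i, (DD (ex i) u p - τ * a i p * u p) ^ 2 := by
        rw [hup, mul_add, Finset.mul_sum, mul_pow]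
        congr 1
        refine Finset.sum_congr rfl fun i _ => ?_
        rw [← hup, ← hgi, mul_pow]
      have e2 : ∑ i, (DD (ex i) u p - τ * a i p * u p) ^ 2
          ≤ 2 * (∑ i, DD (ex i) u p ^ 2) + 2 * τ ^ 2 * (F3 p) * u p ^ 2 := by
        simp only [hF3, Finset.mul_sum, Finset.sum_mul]
        rw [← Finset.sum_add_distrib]
        refine Finset.sum_le_sum fun i _ => ?_
        nlinarith [sq_nonneg (DD (ex i) u p + τ * a i p * u p)]
      have e3 : F3 p * u p ^ 2 ≤ (F3 y0 + 1) * u p ^ 2 := by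
        rcases hgN p with hp | hp
        · gcongr; exact hp.2.2.le
        · simp [hup, hp]
      rw [e1]
      set g2 := ∑ i, DD (ex i) u p ^ 2
      have hg2 : 0 ≤ g2 := Finset.sum_nonneg fun i _ => sq_nonneg _
      have hτ3 : τ ≤ τ ^ 3 := le_self_pow₀ hτ1 (by norm_num)
      have s1 : τ * (u p ^ 2 + ∑ i, (DD (ex i) u p - τ * a i p * u p) ^ 2)
        ≤ τ * (u p ^ 2 + (2 * g2 + 2 * τ ^ 2 * ((F3 y0 + 1) * u p ^ 2))) := by
        gcongr
        refine e2.trans ?_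
        have : 2 * τ ^ 2 * (F3 p * u p ^ 2) ≤ 2 * τ ^ 2 * ((F3 y0 + 1) * u p ^ 2) := by gcongr
        linarith
      have s2 : τ * u p ^ 2 ≤ τ ^ 3 * u p ^ 2 := by gcongr
      have s3 : cc * (τ * g2 + τ ^ 3 * (N2 / 2 / 2) * u p ^ 2) = 2 * τ * g2
          + (1 + 2 * (F3 y0 + 1)) * τ ^ 3 * u p ^ 2
          + ((1 + 2 * (F3 y0 + 1)) / (N2 / 2 / 2) * τ * g2
          + 2 * τ ^ 3 * (N2 / 2 / 2) * u p ^ 2) := by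
        rw [hcc]; field_simp; ring
      have s4 : 0 ≤ (1 + 2 * (F3 y0 + 1)) / (N2 / 2 / 2) * τ * g2
          + 2 * τ ^ 3 * (N2 / 2 / 2) * u p ^ 2 := by positivity
      rw [s3]
      linarith

def Pk (κ : ℝ) (g : XT → ℝ) (p : XT) : ℝ :=
  (∑ i, DD (ex i) (DD (ex i) g) p) + κ * DD et g p

def Ek (g : XT → ℝ) (p : XT) : ℝ := g p ^ 2 + ∑ i, DD (ex i) g p ^ 2

def Gs {ι : Type} [Fintype ι] (f : ι → XT → ℝ) (p : XT) : ℝ :=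
  ∑ l, (|f l p| + ∑ i, |DD (ex i) (f l) p|)

lemma Gs_sq {ι : Type} [Fintype ι] (f : ι → XT → ℝ) (p : XT) :
    Gs f p ^ 2 ≤ (Fintype.card ι * 6 : ℝ) * ∑ l, Ek (f l) p := by
  unfold Gs
  refine (sq_sum_le_card_mul_sum_sq).trans ?_
  have e : (6 : ℝ) * ∑ l, Ek (f l) p = ∑ l, 6 * Ek (f l) p := Finset.mul_sum _ _ _
  rw [mul_assoc, e]
  simp only [Finset.card_univ]
  refine mul_le_mul_of_nonneg_left (Finset.sum_le_sum fun l _ => ?_)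
    (Nat.cast_nonneg (Fintype.card ι) : (0 : ℝ) ≤ _)
  unfold Ek
  have h1 : (∑ i, |DD (ex i) (f l) p|) ^ 2 ≤ 3 * ∑ i, DD (ex i) (f l) p ^ 2 := by
    refine (sq_sum_le_card_mul_sum_sq).trans ?_
    simp
  nlinarith [sq_nonneg (|f l p| - ∑ i, |DD (ex i) (f l) p|), sq_abs (f l p), sq_nonneg (f l p)]

lemma Ek_congr {f g : XT → ℝ} {p : XT} (h : f =ᶠ[nhds p] g) : Ek f p = Ek g p := by
  unfold Ek
  rw [h.eq_of_nhds]
  simp only [(DD_congr h _).eq_of_nhds]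

lemma Pk_congr {f g : XT → ℝ} {p : XT} (h : f =ᶠ[nhds p] g) (κ : ℝ) : Pk κ f p = Pk κ g p := by
  unfold Pk
  rw [(DD_congr h _).eq_of_nhds]
  simp only [(DD_congr (DD_congr h _) _).eq_of_nhds]

lemma Pk_zero (κ : ℝ) (p : XT) : Pk κ 0 p = 0 := by
  have h : ∀ v, DD v (0 : XT → ℝ) = 0 := by intro v; funext p; simp [DD]
  simp [Pk, h]

lemma uc {ι : Type} [Fintype ι] (f : ι → XT → ℝ) (κ : ι → ℝ)
    (hκ : ∀ k, 0 ≤ κ k ∧ κ k ≤ 1) {U : Set XT} (hU : IsOpen U) {y0 : XT} (hy : y0 ∈ U)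
    (hf : ∀ k, ContDiffOn ℝ (⊤ : ℕ∞) (f k) U)
    (hdom : ∀ k, (fun p => Pk (κ k) (f k) p) =O[nhds y0] Gs f)
    {σf : XT → ℝ} (hσ : Smo σf) (h0 : σf y0 = 0)
    (hgrad : ∃ i, DD (ex i) σf y0 ≠ 0)
    (hvan : ∀ k, ∀ᶠ p in nhds y0, σf p < 0 → f k p = 0) (k : ι) :
    ∀ᶠ p in nhds y0, f k p = 0 := by
  classical
  obtain ⟨φ, hφ, hφ0, hφσ, N, hN, c, hc, τ0, hτ0, hcarl⟩ := carleman_w hσ y0 h0 hgrad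
  -- uniform constant
  obtain ⟨C, hC, hCb⟩ : ∃ C : ℝ, 0 < C ∧ ∀ᶠ p in nhds y0, ∀ k,
      Pk (κ k) (f k) p ^ 2 ≤ C * ∑ l, Ek (f l) p := by
    choose Ck hCk hCk' using fun k => (hdom k).exists_pos
    refine ⟨(∑ k, Ck k ^ 2) * (Fintype.card ι * 6) + 1, by positivity, ?_⟩
    have : ∀ᶠ p in nhds y0, ∀ k, ‖Pk (κ k) (f k) p‖ ≤ Ck k * ‖Gs f p‖ :=
      Filter.eventually_all.2 fun k => (hCk' k).bound
    filter_upwards [this] with p hp k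
    have h1 : Pk (κ k) (f k) p ^ 2 ≤ (Ck k * ‖Gs f p‖) ^ 2 := by
      rw [← sq_abs, ← Real.norm_eq_abs]; gcongr; exact hp k
    have h2 : Ck k ^ 2 ≤ ∑ k, Ck k ^ 2 :=
      Finset.single_le_sum (f := fun k => Ck k ^ 2) (fun i _ => sq_nonneg _) (Finset.mem_univ k)
    have h3 := Gs_sq f p
    have h4 : 0 ≤ ∑ l, Ek (f l) p := Finset.sum_nonneg fun l _ => by
      unfold Ek; positivity
    rw [mul_pow, Real.norm_eq_abs, sq_abs] at h1
    calc _ ≤ _ := h1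
      _ ≤ (∑ k, Ck k ^ 2) * ((Fintype.card ι * 6 : ℝ) * ∑ l, Ek (f l) p) := by gcongr
      _ ≤ _ := by linarith
  have hvan' : ∀ᶠ p in nhds y0, ∀ k, σf p < 0 → f k p = 0 := Filter.eventually_all.2 hvan
  have hUe : ∀ᶠ p in nhds y0, p ∈ U := hU.mem_nhds hy
  have hNe : ∀ᶠ p in nhds y0, p ∈ N := hN
  obtain ⟨R, hR, hball⟩ := Metric.eventually_nhds_iff_ball.1
    (hvan'.and (hCb.and (hφσ.and (hUe.and hNe))))
  set δ := R / 3 with hδ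
  have hδ0 : 0 < δ := by positivity
  let χ : ContDiffBump y0 := ⟨δ, 2 * δ, hδ0, by linarith⟩
  set g : ι → XT → ℝ := fun k => (χ : XT → ℝ) * f k with hg
  have hχs : Smo (χ : XT → ℝ) := χ.contDiff
  have hχt : tsupport (χ : XT → ℝ) = Metric.closedBall y0 (2 * δ) := χ.tsupport_eq
  have hoff : ∀ k p, p ∉ Metric.closedBall y0 (2 * δ) → g k =ᶠ[nhds p] 0 := by
    intro k p hp
    rw [← hχt, notMem_tsupport_iff_eventuallyEq] at hp
    filter_upwards [hp] with q hq
    simp [hg, hq]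
  have hgs : ∀ k, Smo (g k) := by
    intro k
    refine contDiff_iff_contDiffAt.2 fun p => ?_
    by_cases hp : p ∈ Metric.closedBall y0 (2 * δ)
    · have hpU : p ∈ U := (hball p (by
        rw [Metric.mem_ball]; rw [Metric.mem_closedBall] at hp; linarith)).2.2.2.1
      exact (hχs.contDiffAt).mul ((hf k).contDiffAt (hU.mem_nhds hpU))
    · exact (contDiffAt_const (c := (0 : ℝ))).congr_of_eventuallyEq (hoff k p hp)
  have hgc : ∀ k, HasCompactSupport (g k) := fun k => χ.hasCompactSupport.mul_right
  have hgN : ∀ k p, p ∈ N ∨ g k p = 0 := by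
    intro k p
    by_cases hp : p ∈ Metric.closedBall y0 (2 * δ)
    · left
      exact (hball p (by
        rw [Metric.mem_ball]; rw [Metric.mem_closedBall] at hp; linarith)).2.2.2.2
    · right; exact (hoff k p hp).eq_of_nhds
  have hin : ∀ p ∈ Metric.ball y0 δ, ∀ k, g k =ᶠ[nhds p] f k := by
    intro p hp k
    filter_upwards [Metric.isOpen_ball.mem_nhds hp] with q hq
    have : χ q = 1 := χ.one_of_mem_closedBall (Metric.ball_subset_closedBall hq)
    simp [hg, this]
  set η := δ ^ 2 with hη
  have hEnn : ∀ l p, 0 ≤ Ek (g l) p := fun l p => by unfold Ek; positivity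
  have hpt : ∀ τ : ℝ, 0 ≤ τ → ∀ k p, Real.exp (τ * φ p) ^ 2 * Pk (κ k) (g k) p ^ 2
      ≤ C * (∑ l, Real.exp (τ * φ p) ^ 2 * Ek (g l) p)
        + Real.exp (τ * (-η)) ^ 2 * Pk (κ k) (g k) p ^ 2 := by
    intro τ hτ k p
    rw [← Finset.mul_sum]
    have hs : 0 ≤ ∑ l, Ek (g l) p := Finset.sum_nonneg fun l _ => hEnn l p
    have hz : g k =ᶠ[nhds p] 0 → Real.exp (τ * φ p) ^ 2 * Pk (κ k) (g k) p ^ 2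
      ≤ C * (Real.exp (τ * φ p) ^ 2 * ∑ l, Ek (g l) p)
        + Real.exp (τ * (-η)) ^ 2 * Pk (κ k) (g k) p ^ 2 := by
      intro h
      rw [Pk_congr h, Pk_zero]
      simp
      positivity
    by_cases hp1 : p ∈ Metric.ball y0 δ
    · have hb := (hball p (Metric.ball_subset_ball (by linarith) hp1)).2.1 k
      have e1 : Pk (κ k) (g k) p = Pk (κ k) (f k) p := Pk_congr (hin p hp1 k) _
      have e2 : ∑ l, Ek (g l) p = ∑ l, Ek (f l) p :=
        Finset.sum_congr rfl fun l _ => Ek_congr (hin p hp1 l)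
      rw [e1, e2]
      have : Real.exp (τ * φ p) ^ 2 * Pk (κ k) (f k) p ^ 2 ≤
        Real.exp (τ * φ p) ^ 2 * (C * ∑ l, Ek (f l) p) := by gcongr
      have h2 : 0 ≤ Real.exp (τ * (-η)) ^ 2 * Pk (κ k) (f k) p ^ 2 := by positivity
      linarith
    by_cases hp2 : p ∈ Metric.closedBall y0 (2 * δ)
    swap
    · exact hz (hoff k p hp2)
    have hpR : p ∈ Metric.ball y0 R := by
      rw [Metric.mem_ball]; rw [Metric.mem_closedBall] at hp2; linarith
    by_cases hp3 : σf p < 0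
    · apply hz
      filter_upwards [Metric.isOpen_ball.mem_nhds hpR,
        hσ.continuous.continuousAt.eventually (gt_mem_nhds hp3)] with q hq1 hq2
      have hq3 := (hball q hq1).1 k hq2
      simp [hg, hq3]
    · have h1 := (hball p hpR).2.2.1 (not_lt.1 hp3)
      have h2 : δ ≤ ‖p - y0‖ := by
        rw [Metric.mem_ball, not_lt, dist_eq_norm] at hp1; exact hp1
      have h3 : φ p ≤ -η := by
        have : δ ^ 2 ≤ ‖p - y0‖ ^ 2 := by gcongr
        linarith
      have h4 : Real.exp (τ * φ p) ^ 2 * Pk (κ k) (g k) p ^ 2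
          ≤ Real.exp (τ * (-η)) ^ 2 * Pk (κ k) (g k) p ^ 2 := by gcongr
      have h5 : 0 ≤ C * (Real.exp (τ * φ p) ^ 2 * ∑ l, Ek (g l) p) := by positivity
      linarith
  have hφc := hφ.continuous
  have hEc : ∀ l, Continuous (Ek (g l)) := by
    intro l
    have h1 := (hgs l).continuous
    have h2 := fun v => ((hgs l).DD v).continuous
    unfold Ek; fun_prop
  have hPc : ∀ l, Continuous (Pk (κ l) (g l)) := by
    intro l
    have h1 := (hgs l).continuous
    have h2 := fun v => ((hgs l).DD v).continuous
    have h3 := fun v w => (((hgs l).DD v).DD w).continuous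
    unfold Pk; fun_prop
  have hEi : ∀ (τ : ℝ) l, Integrable (fun p => Real.exp (τ * φ p) ^ 2 * Ek (g l) p) := by
    intro τ l
    have h1 := hEc l
    refine Continuous.integrable_of_hasCompactSupport (by fun_prop) ?_
    refine HasCompactSupport.intro (hgc l) (fun p hp => ?_)
    simp [Ek, off_zero hp, DD_zero_off hp]
  have hPi0 : ∀ (ψ : XT → ℝ), Continuous ψ → ∀ l, Integrable (fun p => ψ p * Pk (κ l) (g l) p ^ 2) := by
    intro ψ hψ l
    have h1 := hPc l
    refine Continuous.integrable_of_hasCompactSupport (by fun_prop) ?_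
    refine HasCompactSupport.intro (hgc l) (fun p hp => ?_)
    simp [Pk, DD_zero_off hp, DD_zero_off (DD_off hp _)]
  set I : ℝ → ι → ℝ := fun τ l => ∫ p, Real.exp (τ * φ p) ^ 2 * Ek (g l) p with hI
  set J : ι → ℝ := fun l => ∫ p, Pk (κ l) (g l) p ^ 2 with hJ
  have hI0 : ∀ τ l, 0 ≤ I τ l := fun τ l => integral_nonneg fun p => by
    have := hEnn l p
    positivity
  have hJ0 : ∀ l, 0 ≤ J l := fun l => integral_nonneg fun p => sq_nonneg _
  have hest : ∀ τ, τ0 ≤ τ → ∀ l, τ * I τ l ≤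
      c * (C * (∑ m, I τ m) + Real.exp (τ * (-η)) ^ 2 * J l) := by
    intro τ hτ l
    refine (hcarl τ hτ (κ l) (hκ l).1 (hκ l).2 (g l) (hgs l) (hgc l) (hgN l)).trans ?_
    refine mul_le_mul_of_nonneg_left ?_ hc.le
    have e1 : C * (∑ m, I τ m) + Real.exp (τ * (-η)) ^ 2 * J l =
        ∫ p, (C * (∑ m, Real.exp (τ * φ p) ^ 2 * Ek (g m) p)
        + Real.exp (τ * (-η)) ^ 2 * Pk (κ l) (g l) p ^ 2) := by
      rw [integral_add ((integrable_finsetSum _ fun m _ => hEi τ m).const_mul C)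
        (hPi0 (fun _ => Real.exp (τ * (-η)) ^ 2) continuous_const l), integral_const_mul,
        integral_const_mul, integral_finsetSum _ fun m _ => hEi τ m]
    rw [e1]
    refine integral_mono (hPi0 (fun p => Real.exp (τ * φ p) ^ 2) (by fun_prop) l)
      (((integrable_finsetSum _ fun m _ => hEi τ m).const_mul C).add
        (hPi0 (fun _ => Real.exp (τ * (-η)) ^ 2) continuous_const l)) ?_
    intro p
    exact hpt τ (by linarith) l p
  set m : ℝ := (Fintype.card ι : ℝ) with hm
  have hest2 : ∀ τ, max τ0 (2 * (c * C * m)) ≤ τ →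
      τ / 2 * (∑ l, I τ l) ≤ c * Real.exp (τ * (-η)) ^ 2 * ∑ l, J l := by
    intro τ hτ
    have h1 := (le_max_left _ _).trans hτ
    have h2 := (le_max_right _ _).trans hτ
    have h3 := Finset.sum_le_sum fun l (_ : l ∈ Finset.univ) => hest τ h1 l
    rw [← Finset.mul_sum, ← Finset.mul_sum, Finset.sum_add_distrib, ← Finset.mul_sum,
      Finset.sum_const, nsmul_eq_mul, Finset.card_univ, ← Finset.mul_sum, ← hm] at h3
    have h4 : 0 ≤ ∑ l, I τ l := Finset.sum_nonneg fun l _ => hI0 τ l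
    have h5 : (c * C * m) * (∑ l, I τ l) ≤ τ / 2 * (∑ l, I τ l) := by gcongr; linarith
    linarith
  set V : Set XT := {p | -η < φ p} with hV
  have hVo : IsOpen V := isOpen_lt continuous_const hφc
  have hVy : V ∈ nhds y0 := hVo.mem_nhds (by simp [hV, hφ0]; positivity)
  have hg2i : Integrable (fun p => g k p ^ 2) := by
    have := (hgs k).continuous
    refine Continuous.integrable_of_hasCompactSupport (by fun_prop) ?_
    exact HasCompactSupport.intro (hgc k) (fun p hp => by simp [off_zero hp])
  have hest3 : ∀ τ, max τ0 (2 * (c * C * m)) ≤ τ →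
      ∫ p in V, g k p ^ 2 ≤ (2 * c * ∑ l, J l) / τ := by
    intro τ hτ
    have hτ1 : 1 ≤ τ := hτ0.trans ((le_max_left _ _).trans hτ)
    have h1 := hest2 τ hτ
    have h2 : I τ k ≤ ∑ l, I τ l :=
      Finset.single_le_sum (f := fun l => I τ l) (fun l _ => hI0 τ l) (Finset.mem_univ k)
    have h3 : Real.exp (τ * (-η)) ^ 2 * ∫ p in V, g k p ^ 2 ≤ I τ k := by
      rw [← integral_const_mul]
      calc _ ≤ ∫ p in V, Real.exp (τ * φ p) ^ 2 * Ek (g k) p := by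
            refine setIntegral_mono_on (hg2i.const_mul _).integrableOn (hEi τ k).integrableOn
              hVo.measurableSet ?_
            intro p hp
            have : g k p ^ 2 ≤ Ek (g k) p := by
              unfold Ek
              have : 0 ≤ ∑ i, DD (ex i) (g k) p ^ 2 := by positivity
              linarith
            have hp' : -η ≤ φ p := le_of_lt hp
            gcongr
        _ ≤ _ := setIntegral_le_integral (hEi τ k) (Filter.Eventually.of_forall fun p => by
            have := hEnn k p
            positivity)
    rw [le_div_iff₀ (by linarith)]
    have he : 0 < Real.exp (τ * (-η)) ^ 2 := by positivity
    refine le_of_mul_le_mul_left ?_ he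
    have h4 : τ / 2 * (Real.exp (τ * (-η)) ^ 2 * ∫ p in V, g k p ^ 2) ≤ τ / 2 * ∑ l, I τ l := by
      gcongr; linarith
    linarith
  have hzero : ∫ p in V, g k p ^ 2 = 0 := by
    refine le_antisymm ?_ (integral_nonneg fun p => sq_nonneg _)
    have ht : Filter.Tendsto (fun τ : ℝ => (2 * c * ∑ l, J l) / τ) Filter.atTop (nhds 0) :=
      Filter.Tendsto.div_atTop tendsto_const_nhds Filter.tendsto_id
    exact ge_of_tendsto ht ((Filter.eventually_ge_atTop _).mono hest3)
  have hae : (fun p => g k p ^ 2) =ᵐ[volume.restrict V] fun _ => 0 :=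
    (integral_eq_zero_iff_of_nonneg (fun p => sq_nonneg _) hg2i.integrableOn).1 hzero
  have hEq := Measure.eqOn_open_of_ae_eq hae hVo
    (((hgs k).continuous.pow 2).continuousOn) continuousOn_const
  filter_upwards [hVy, Metric.ball_mem_nhds y0 hδ0] with p hp1 hp2
  have := hEq hp1
  rw [← (hin p hp2 k).eq_of_nhds]
  simpa using this

lemma pdx_eq {f : XT → ℝ} {p : XT} (hf : DifferentiableAt ℝ f p) (i : Fin 3) :
    pdx i f p = DD (ex i) f p := by
  unfold pdx pd DD ex
  have h1 : HasFDerivAt (fun y : E3 => ((p.1, y) : XT))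
      ((0 : E3 →L[ℝ] ℝ).prod (ContinuousLinearMap.id ℝ E3)) p.2 :=
    (hasFDerivAt_const p.1 p.2).prodMk (hasFDerivAt_id p.2)
  have h2 : HasFDerivAt f (fderiv ℝ f p) (p.1, p.2) := hf.hasFDerivAt
  have h3 := (HasFDerivAt.comp (𝕜 := ℝ) p.2 h2 h1).fderiv
  have h4 : (fun y => f (p.1, y)) = f ∘ fun y : E3 => ((p.1, y) : XT) := rfl
  rw [h4, h3]
  simp

lemma pdt_eq {f : XT → ℝ} {p : XT} (hf : DifferentiableAt ℝ f p) :
    pdt f p = DD et f p := by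
  unfold pdt DD et
  have h1 : HasDerivAt (fun s : ℝ => ((s, p.2) : XT)) ((1 : ℝ), (0 : E3)) p.1 :=
    (hasDerivAt_id p.1).prodMk (hasDerivAt_const p.1 p.2)
  have h2 : HasFDerivAt f (fderiv ℝ f p) (p.1, p.2) := hf.hasFDerivAt
  exact (HasFDerivAt.comp_hasDerivAt p.1 h2 h1).deriv

section onU
variable {U : Set XT} (hU : IsOpen U)

lemma con_dat {f : XT → ℝ} {p : XT} (hU : IsOpen U) (hf : ContDiffOn ℝ (⊤ : ℕ∞) f U)
    (hp : p ∈ U) : DifferentiableAt ℝ f p :=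
  (hf.contDiffAt (hU.mem_nhds hp)).differentiableAt (by simp)

lemma laplx_eq {f : XT → ℝ} {p : XT} (hU : IsOpen U) (hf : ContDiffOn ℝ (⊤ : ℕ∞) f U)
    (hp : p ∈ U) : laplx f p = ∑ i, DD (ex i) (DD (ex i) f) p := by
  unfold laplx
  refine Finset.sum_congr rfl fun i _ => ?_
  rw [← pdx_eq (con_dat hU (smo_DD_on hU hf (ex i)) hp)]
  unfold pdx
  have hc : Continuous fun y : E3 => ((p.1, y) : XT) := by fun_prop
  have he : (fun y => pd i (fun z => f (p.1, z)) y) =ᶠ[nhds p.2] fun y => DD (ex i) f (p.1, y) := by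
    filter_upwards [hc.continuousAt.preimage_mem_nhds (hU.mem_nhds hp)] with y hy
    exact pdx_eq (con_dat hU hf (p := (p.1, y)) hy) i
  unfold pd at he ⊢
  rw [he.fderiv_eq]

lemma Pk_eq (κ : ℝ) {f : XT → ℝ} {p : XT} (hU : IsOpen U) (hf : ContDiffOn ℝ (⊤ : ℕ∞) f U)
    (hp : p ∈ U) : Pk κ f p = laplx f p + κ * pdt f p := by
  rw [laplx_eq hU hf hp, pdt_eq (con_dat hU hf hp)]; rfl

lemma DD_on {f g : XT → ℝ} {p : XT} (hU : IsOpen U) (hp : p ∈ U) (h : ∀ x ∈ U, f x = g x)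
    (v : XT) : DD v f p = DD v g p :=
  (DD_congr (Filter.eventually_of_mem (hU.mem_nhds hp) h) v).eq_of_nhds

lemma Pk_on {f g : XT → ℝ} {p : XT} (hU : IsOpen U) (hp : p ∈ U) (h : ∀ x ∈ U, f x = g x)
    (κ : ℝ) : Pk κ f p = Pk κ g p :=
  Pk_congr (Filter.eventually_of_mem (hU.mem_nhds hp) h) κ

def lin (c : Fin 3 → ℝ) (F : Fin 3 → XT → ℝ) : XT → ℝ := fun p => ∑ i, c i * F i p

lemma lin_on {c : Fin 3 → ℝ} {F : Fin 3 → XT → ℝ} (hF : ∀ i, ContDiffOn ℝ (⊤ : ℕ∞) (F i) U) :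
    ContDiffOn ℝ (⊤ : ℕ∞) (lin c F) U := by
  unfold lin
  exact ContDiffOn.sum fun i _ => contDiffOn_const.mul (hF i)

lemma DD_lin {c : Fin 3 → ℝ} {F : Fin 3 → XT → ℝ} {p : XT}
    (hF : ∀ i, DifferentiableAt ℝ (F i) p) (v : XT) :
    DD v (lin c F) p = ∑ i, c i * DD v (F i) p := by
  have h : HasFDerivAt (lin c F) (∑ i, c i • fderiv ℝ (F i) p) p :=
    HasFDerivAt.fun_sum fun i _ => ((hF i).hasFDerivAt.const_mul (c i))
  unfold DD
  rw [h.fderiv]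
  simp

lemma Pk_smo (κ : ℝ) {f : XT → ℝ} (hU : IsOpen U) (hf : ContDiffOn ℝ (⊤ : ℕ∞) f U) :
    ContDiffOn ℝ (⊤ : ℕ∞) (Pk κ f) U := by
  unfold Pk
  exact (ContDiffOn.sum fun i _ => smo_DD_on hU (smo_DD_on hU hf _) _).add
    (contDiffOn_const.mul (smo_DD_on hU hf _))

lemma DD_lin_on {c : Fin 3 → ℝ} {F : Fin 3 → XT → ℝ} {p : XT} (hU : IsOpen U)
    (hF : ∀ i, ContDiffOn ℝ (⊤ : ℕ∞) (F i) U) (hp : p ∈ U) (v : XT) :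
    DD v (lin c F) p = lin c (fun i => DD v (F i)) p :=
  DD_lin (fun i => con_dat hU (hF i) hp) v

lemma Pk_lin (κ : ℝ) {c : Fin 3 → ℝ} {F : Fin 3 → XT → ℝ} {p : XT} (hU : IsOpen U)
    (hF : ∀ i, ContDiffOn ℝ (⊤ : ℕ∞) (F i) U) (hp : p ∈ U) :
    Pk κ (lin c F) p = ∑ i, c i * Pk κ (F i) p := by
  have h2 : ∀ v w, DD v (DD w (lin c F)) p = ∑ i, c i * DD v (DD w (F i)) p := by
    intro v w
    rw [DD_on hU hp (fun x hx => DD_lin_on hU hF hx w) v,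
      DD_lin_on hU (fun i => smo_DD_on hU (hF i) w) hp]
    rfl
  unfold Pk
  simp only [h2]
  rw [DD_lin_on hU hF hp]
  simp only [lin, Fin.sum_univ_three]
  ring

lemma Pk_DD (κ : ℝ) {f : XT → ℝ} {p : XT} (hU : IsOpen U)
    (hf : ContDiffOn ℝ (⊤ : ℕ∞) f U) (hp : p ∈ U) (v : XT) :
    Pk κ (DD v f) p = DD v (Pk κ f) p := by
  have hc : ∀ w, ∀ x ∈ U, DD w (DD v f) x = DD v (DD w f) x := fun w x hx =>
    DD_comm_at (hf.contDiffAt (hU.mem_nhds hx)) w v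
  have h2 : ∀ w, DD w (DD w (DD v f)) p = DD v (DD w (DD w f)) p := by
    intro w
    rw [DD_on hU hp (hc w) w]
    exact DD_comm_at ((smo_DD_on hU hf w).contDiffAt (hU.mem_nhds hp)) w v
  have d2 : ∀ i, DifferentiableAt ℝ (DD (ex i) (DD (ex i) f)) p := fun i =>
    con_dat hU (smo_DD_on hU (smo_DD_on hU hf _) _) hp
  have e : Pk κ f = lin (fun _ => 1) (fun i => DD (ex i) (DD (ex i) f))
      + (fun _ => κ) * DD et f := by
    funext x; simp [Pk, lin]
  have d3 : DifferentiableAt ℝ (DD et f) p := con_dat hU (smo_DD_on hU hf _) hp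
  have d4 : DifferentiableAt ℝ (lin (fun _ => 1) (fun i => DD (ex i) (DD (ex i) f))) p :=
    con_dat hU (lin_on fun i => smo_DD_on hU (smo_DD_on hU hf _) _) hp
  rw [e, DD_add_at d4 ((differentiableAt_const κ).mul d3), DD_lin d2,
    DD_mul_at (differentiableAt_const κ) d3]
  have hk : DD v (fun _ => κ) p = 0 := by simp [DD]
  rw [hk]
  unfold Pk
  simp only [h2, hc et p hp]
  simp

end onU

lemma Gs_f {ι : Type} [Fintype ι] (f : ι → XT → ℝ) (y0 : XT) (l : ι) :
    f l =O[nhds y0] Gs f := by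
  refine Asymptotics.IsBigO.of_bound 1 (Filter.Eventually.of_forall fun p => ?_)
  rw [one_mul]
  have h0 : ∀ l, 0 ≤ |f l p| + ∑ i, |DD (ex i) (f l) p| := fun l => by positivity
  have h1 := Finset.single_le_sum (f := fun l => |f l p| + ∑ i, |DD (ex i) (f l) p|)
    (fun l _ => h0 l) (Finset.mem_univ l)
  have h2 : 0 ≤ ∑ i, |DD (ex i) (f l) p| := by positivity
  rw [Real.norm_eq_abs, Real.norm_eq_abs]
  refine le_trans ?_ (le_abs_self _)
  unfold Gs
  linarith

lemma Gs_D {ι : Type} [Fintype ι] (f : ι → XT → ℝ) (y0 : XT) (l : ι) (i : Fin 3) :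
    DD (ex i) (f l) =O[nhds y0] Gs f := by
  refine Asymptotics.IsBigO.of_bound 1 (Filter.Eventually.of_forall fun p => ?_)
  rw [one_mul]
  have h0 : ∀ l, 0 ≤ |f l p| + ∑ i, |DD (ex i) (f l) p| := fun l => by positivity
  have h1 := Finset.single_le_sum (f := fun l => |f l p| + ∑ i, |DD (ex i) (f l) p|)
    (fun l _ => h0 l) (Finset.mem_univ l)
  have h2 := Finset.single_le_sum (f := fun i => |DD (ex i) (f l) p|)
    (fun l _ => abs_nonneg _) (Finset.mem_univ i)
  rw [Real.norm_eq_abs, Real.norm_eq_abs]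
  refine le_trans ?_ (le_abs_self _)
  unfold Gs
  linarith [abs_nonneg (f l p)]

lemma O_cmul {c h G : XT → ℝ} {y0 : XT} (hc : ContinuousAt c y0) (hh : h =O[nhds y0] G) :
    (fun p => c p * h p) =O[nhds y0] G := by
  have h1 : c =O[nhds y0] (fun _ => (1 : ℝ)) := hc.isBigO_one ℝ
  simpa using h1.mul hh

lemma DD_sub_at {f g : XT → ℝ} {p : XT} (hf : DifferentiableAt ℝ f p)
    (hg : DifferentiableAt ℝ g p) (v : XT) :
    DD v (f - g) p = DD v f p - DD v g p := by
  unfold DD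
  rw [fderiv_sub hf hg]
  simp

/-- smooth functions controlled, with their spatial gradient, by `G` near `y0` -/
structure Good (U : Set XT) (y0 : XT) (G g : XT → ℝ) : Prop where
  smo : ContDiffOn ℝ (⊤ : ℕ∞) g U
  O0 : g =O[nhds y0] G
  O1 : ∀ j, DD (ex j) g =O[nhds y0] G

section good
variable {U : Set XT} {y0 : XT} {G : XT → ℝ}

lemma Good.cmul (hU : IsOpen U) (hy : y0 ∈ U) {c g : XT → ℝ} (hc : Smo c)
    (hg : Good U y0 G g) : Good U y0 G (c * g) := by
  refine ⟨hc.contDiffOn.mul hg.smo, O_cmul hc.continuous.continuousAt hg.O0, fun j => ?_⟩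
  have h := (O_cmul (hc.continuous.continuousAt (x := y0)) (hg.O1 j)).add
    (O_cmul ((hc.DD (ex j)).continuous.continuousAt (x := y0)) hg.O0)
  refine h.congr' ?_ Filter.EventuallyEq.rfl
  filter_upwards [hU.mem_nhds hy] with p hp
  exact (DD_mul_at (hc.dat p) (con_dat hU hg.smo hp) _).symm

lemma Good.add (hU : IsOpen U) (hy : y0 ∈ U) {f g : XT → ℝ} (hf : Good U y0 G f)
    (hg : Good U y0 G g) : Good U y0 G (f + g) := by
  refine ⟨hf.smo.add hg.smo, hf.O0.add hg.O0, fun j => ?_⟩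
  refine ((hf.O1 j).add (hg.O1 j)).congr' ?_ Filter.EventuallyEq.rfl
  filter_upwards [hU.mem_nhds hy] with p hp
  exact (DD_add_at (con_dat hU hf.smo hp) (con_dat hU hg.smo hp) _).symm

lemma Good.sub (hU : IsOpen U) (hy : y0 ∈ U) {f g : XT → ℝ} (hf : Good U y0 G f)
    (hg : Good U y0 G g) : Good U y0 G (f - g) := by
  refine ⟨hf.smo.sub hg.smo, hf.O0.sub hg.O0, fun j => ?_⟩
  refine ((hf.O1 j).sub (hg.O1 j)).congr' ?_ Filter.EventuallyEq.rfl
  filter_upwards [hU.mem_nhds hy] with p hp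
  exact (DD_sub_at (con_dat hU hf.smo hp) (con_dat hU hg.smo hp) _).symm

lemma Good.lin (hU : IsOpen U) (hy : y0 ∈ U) {F : Fin 3 → XT → ℝ} (c : Fin 3 → ℝ)
    (hF : ∀ i, Good U y0 G (F i)) : Good U y0 G (lin c F) := by
  have e : _root_.lin c F = (fun _ => c 0) * F 0 + (fun _ => c 1) * F 1 + (fun _ => c 2) * F 2 := by
    funext p; simp [_root_.lin, Fin.sum_univ_three]
  rw [e]
  exact (((hF 0).cmul hU hy contDiff_const).add hU hy ((hF 1).cmul hU hy contDiff_const)).add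
    hU hy ((hF 2).cmul hU hy contDiff_const)

end good

lemma uc_sys (R : Matrix (Fin 3) (Fin 3) ℝ) (hR : R * R.transpose = 1)
    {v : Fin 3 → XT → ℝ} {T : XT → ℝ} (hv : ∀ i, Smo (v i)) (hT : Smo T)
    {U : Set XT} (hU : IsOpen U) {y0 : XT} (hy : y0 ∈ U)
    {ψ q : XT → ℝ} {w : Fin 3 → XT → ℝ}
    (hψ : ContDiffOn ℝ (⊤ : ℕ∞) ψ U) (hq : ContDiffOn ℝ (⊤ : ℕ∞) q U)
    (hw : ∀ i, ContDiffOn ℝ (⊤ : ℕ∞) (w i) U)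
    (h1 : ∀ p ∈ U, Pk 1 ψ p = w 2 p - ∑ i, DD (ex i) (ψ * v i) p)
    (h2 : ∀ p ∈ U, ∀ i, Pk 0 (w i) p = lin (R i) (fun j => DD (ex j) q) p
      - ψ p * lin (R i) (fun j => DD (ex j) T) p)
    (h3 : ∀ p ∈ U, ∑ i, DD (ex i) (lin (fun j => R j i) w) p = 0)
    {σf : XT → ℝ} (hσ : Smo σf) (h0 : σf y0 = 0) (hgrad : ∃ i, DD (ex i) σf y0 ≠ 0)
    (hvan : ∀ᶠ p in nhds y0, σf p < 0 → ψ p = 0) :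
    ∀ᶠ p in nhds y0, ψ p = 0 := by
  have hψj : ∀ j, ContDiffOn ℝ (⊤ : ℕ∞) (DD (ex j) ψ) U := fun j => smo_DD_on hU hψ _
  have hqj : ∀ j, ContDiffOn ℝ (⊤ : ℕ∞) (DD (ex j) q) U := fun j => smo_DD_on hU hq _
  have hR' : R.transpose * R = 1 := mul_eq_one_comm.1 hR
  have horth : ∀ k j, ∑ i, R i k * R i j = if k = j then 1 else 0 := by
    intro k j
    have := congrFun (congrFun hR' k) j
    simpa [Matrix.mul_apply, Matrix.one_apply] using this
  -- equation for the rotated velocity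
  have hA : ∀ k, ∀ p ∈ U, Pk 0 (lin (fun i => R i k) w) p
      = (DD (ex k) q - DD (ex k) T * ψ) p := by
    intro k p hp
    rw [Pk_lin 0 hU hw hp]
    simp only [h2 p hp, lin, Fin.sum_univ_three, Pi.sub_apply, Pi.mul_apply]
    have o0 := horth k 0
    have o1 := horth k 1
    have o2 := horth k 2
    simp only [Fin.sum_univ_three] at o0 o1 o2
    have : ∀ X : Fin 3 → ℝ, R 0 k * (R 0 0 * X 0 + R 0 1 * X 1 + R 0 2 * X 2)
        + R 1 k * (R 1 0 * X 0 + R 1 1 * X 1 + R 1 2 * X 2)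
        + R 2 k * (R 2 0 * X 0 + R 2 1 * X 1 + R 2 2 * X 2) = X k := by
      intro X
      have : X k = (if k = 0 then 1 else 0) * X 0 + (if k = 1 then 1 else 0) * X 1
        + (if k = 2 then 1 else 0) * X 2 := by fin_cases k <;> simp
      rw [this, ← o0, ← o1, ← o2]; ring
    have e1 := this (fun j => DD (ex j) q p)
    have e2 := this (fun j => DD (ex j) T p)
    linear_combination e1 - ψ p * e2
  have hTψ : ∀ k, ContDiffOn ℝ (⊤ : ℕ∞) (DD (ex k) T * ψ) U := fun k =>
    (hT.DD _).contDiffOn.mul hψ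
  -- pressure equation
  have hB : ∀ p ∈ U, Pk 0 q p
      = lin (fun _ => 1) (fun k => DD (ex k) T * DD (ex k) ψ + DD (ex k) (DD (ex k) T) * ψ) p := by
    intro p hp
    have s1 : ∀ k, ContDiffOn ℝ (⊤ : ℕ∞) (lin (fun i => R i k) w) U := fun k => lin_on hw
    have z : Pk 0 (lin (fun _ => 1) fun k => DD (ex k) (lin (fun i => R i k) w)) p = 0 := by
      rw [Pk_on (g := 0) hU hp _ 0, Pk_zero]
      intro x hx
      simpa [lin] using h3 x hx
    rw [Pk_lin 0 hU (fun k => smo_DD_on hU (s1 k) _) hp] at z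
    have z2 : ∀ k, Pk 0 (DD (ex k) (lin (fun i => R i k) w)) p = DD (ex k) (DD (ex k) q) p
        - (DD (ex k) T p * DD (ex k) ψ p + DD (ex k) (DD (ex k) T) p * ψ p) := by
      intro k
      rw [Pk_DD 0 hU (s1 k) hp, DD_on hU hp (hA k),
        DD_sub_at (con_dat hU (hqj k) hp) (con_dat hU (hTψ k) hp),
        DD_mul_at ((hT.DD _).dat p) (con_dat hU hψ hp)]
    simp only [z2] at z
    simp only [Pk, lin, Fin.sum_univ_three, Pi.add_apply, Pi.mul_apply] at z ⊢
    linarith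
  -- the six functions
  set P : XT → ℝ := lin (R 2) (fun j => DD (ex j) q) with hP
  let f : Fin 3 ⊕ Fin 3 → XT → ℝ := Sum.elim (fun j => DD (ex j) ψ) ![ψ, w 2, P]
  let κ : Fin 3 ⊕ Fin 3 → ℝ := Sum.elim (fun _ => 1) ![1, 0, 0]
  have sP : ContDiffOn ℝ (⊤ : ℕ∞) P U := lin_on hqj
  have sf : ∀ k, ContDiffOn ℝ (⊤ : ℕ∞) (f k) U := by
    rintro (j | j)
    · exact hψj j
    · fin_cases j
      · exact hψ
      · exact hw 2
      · exact sP
  have gf : ∀ k, Good U y0 (Gs f) (f k) := fun k => ⟨sf k, Gs_f f y0 k, fun j => Gs_D f y0 k j⟩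
  have gψ : Good U y0 (Gs f) ψ := gf (Sum.inr 0)
  have gw : Good U y0 (Gs f) (w 2) := gf (Sum.inr 1)
  have gP : Good U y0 (Gs f) P := gf (Sum.inr 2)
  have gψj : ∀ j, Good U y0 (Gs f) (DD (ex j) ψ) := fun j => gf (Sum.inl j)
  -- right-hand sides
  have hQ1 : ∀ p ∈ U, Pk 1 ψ p
      = (w 2 - lin (fun _ => 1) (fun i => v i * DD (ex i) ψ + DD (ex i) (v i) * ψ)) p := by
    intro p hp
    rw [h1 p hp]
    have : ∀ i, DD (ex i) (ψ * v i) p = v i p * DD (ex i) ψ p + DD (ex i) (v i) p * ψ p := by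
      intro i
      rw [DD_mul_at (con_dat hU hψ hp) ((hv i).dat p)]; ring
    simp [this, lin]
  have gQ1 : Good U y0 (Gs f)
      (w 2 - lin (fun _ => 1) (fun i => v i * DD (ex i) ψ + DD (ex i) (v i) * ψ)) :=
    gw.sub hU hy (Good.lin hU hy _ fun i => ((gψj i).cmul hU hy (hv i)).add hU hy
      (gψ.cmul hU hy ((hv i).DD _)))
  have gQ2 : Good U y0 (Gs f)
      (lin (fun _ => 1) (fun k => DD (ex k) T * DD (ex k) ψ + DD (ex k) (DD (ex k) T) * ψ)) :=
    Good.lin hU hy _ fun i => ((gψj i).cmul hU hy (hT.DD _)).add hU hy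
      (gψ.cmul hU hy ((hT.DD _).DD _))
  have sA : Smo (lin (R 2) (fun j => DD (ex j) T)) := by
    unfold lin
    exact ContDiff.sum fun i _ => contDiff_const.mul (hT.DD _)
  have hev : ∀ᶠ p in nhds y0, p ∈ U := hU.mem_nhds hy
  refine uc f κ ?_ hU hy sf ?_ hσ h0 hgrad ?_ (Sum.inr 0)
  · rintro (j | j)
    · simp [κ]
    · fin_cases j <;> simp [κ]
  · rintro (j | j)
    · change (fun p => Pk 1 (DD (ex j) ψ) p) =O[nhds y0] Gs f
      refine (gQ1.O1 j).congr' ?_ Filter.EventuallyEq.rfl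
      filter_upwards [hev] with p hp
      rw [Pk_DD 1 hU hψ hp, DD_on hU hp hQ1]
    · fin_cases j
      · change (fun p => Pk 1 ψ p) =O[nhds y0] Gs f
        refine gQ1.O0.congr' ?_ Filter.EventuallyEq.rfl
        filter_upwards [hev] with p hp
        rw [hQ1 p hp]
      · change (fun p => Pk 0 (w 2) p) =O[nhds y0] Gs f
        refine (gP.O0.sub (gψ.cmul hU hy sA).O0).congr' ?_ Filter.EventuallyEq.rfl
        filter_upwards [hev] with p hp
        rw [h2 p hp 2, Pi.mul_apply, mul_comm]
      · change (fun p => Pk 0 P p) =O[nhds y0] Gs f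
        have hs := Asymptotics.IsBigO.sum (A := fun j => fun p => R 2 j * DD (ex j)
          (lin (fun _ => 1) (fun k => DD (ex k) T * DD (ex k) ψ
            + DD (ex k) (DD (ex k) T) * ψ)) p) (s := Finset.univ) (l := nhds y0) (g := Gs f)
          (fun j _ => (gQ2.O1 j).const_mul_left (R 2 j))
        refine hs.congr' ?_ Filter.EventuallyEq.rfl
        filter_upwards [hev] with p hp
        rw [hP, Pk_lin 0 hU hqj hp, Finset.sum_apply]
        refine Finset.sum_congr rfl fun j _ => ?_
        rw [Pk_DD 0 hU hq hp, DD_on hU hp hB]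
  · have hz : ∀ᶠ p in nhds y0, σf p < 0 → ψ =ᶠ[nhds p] 0 := by
      filter_upwards [hvan.eventually_nhds] with p hp hs
      filter_upwards [hp, hσ.continuous.continuousAt.eventually_lt continuousAt_const hs]
        with x hx hsx
      exact hx hsx
    have hDz : ∀ u, DD u (0 : XT → ℝ) = 0 := by intro u; funext p; simp [DD]
    have hwz : ∀ᶠ p in nhds y0, σf p < 0 → w 2 =ᶠ[nhds p] 0 := by
      filter_upwards [hz.eventually_nhds, hev.eventually_nhds] with p hp hpU hs
      filter_upwards [hp, hpU, hσ.continuous.continuousAt.eventually_lt continuousAt_const hs]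
        with x hx hxU hsx
      have a := hx hsx
      have b := h1 x hxU
      rw [Pk_congr a, Pk_zero] at b
      have c : ∀ i, DD (ex i) (ψ * v i) x = 0 := by
        intro i
        have : ψ * v i =ᶠ[nhds x] 0 := by
          filter_upwards [a] with y hy'
          simp [hy']
        rw [(DD_congr this _).eq_of_nhds, hDz]; rfl
      simp only [c] at b
      simp only [Finset.sum_const_zero, sub_zero] at b
      exact b.symm
    rintro (j | j)
    · change ∀ᶠ p in nhds y0, σf p < 0 → DD (ex j) ψ p = 0
      filter_upwards [hz] with p hp hs
      rw [(DD_congr (hp hs) _).eq_of_nhds, hDz]; rfl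
    · fin_cases j
      · exact hvan
      · change ∀ᶠ p in nhds y0, σf p < 0 → w 2 p = 0
        filter_upwards [hwz] with p hp hs
        exact (hp hs).eq_of_nhds
      · change ∀ᶠ p in nhds y0, σf p < 0 → P p = 0
        filter_upwards [hwz, hz, hev] with p hp hp2 hpU hs
        have b := h2 p hpU 2
        rw [Pk_congr (hp hs), Pk_zero, (hp2 hs).eq_of_nhds] at b
        simp only [Pi.zero_apply, zero_mul, sub_zero] at b
        exact b.symm

lemma ballB_basis {S : Set XT} {y0 : XT} (hS : S ∈ nhds y0) :
    ∃ ε ∈ Ioo (0 : ℝ) 1, ballB ε y0 ⊆ S := by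
  obtain ⟨δ, hδ, hb⟩ := Metric.mem_nhds_iff.1 hS
  refine ⟨min (1/2) (δ / 4), ⟨by positivity, by
    exact lt_of_le_of_lt (min_le_left _ _) (by norm_num)⟩, fun p hp => hb ?_⟩
  have h4 : min (1/2) (δ/4) ≤ δ / 4 := min_le_right _ _
  have hp1 := hp.1.trans h4
  have hp2 := fun i => (hp.2 i).trans h4
  rw [Metric.mem_ball, Prod.dist_eq, max_lt_iff]
  constructor
  · rw [Real.dist_eq]; linarith
  · rw [EuclideanSpace.dist_eq, Real.sqrt_lt' hδ, Fin.sum_univ_three]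
    have hsq : ∀ i, dist (p.2 i) (y0.2 i) ^ 2 ≤ (δ / 4) ^ 2 := fun i => by
      rw [Real.dist_eq]
      exact pow_le_pow_left₀ (abs_nonneg _) (hp2 i) 2
    nlinarith [hsq 0, hsq 1, hsq 2, sq_pos_of_pos hδ]

lemma cylW_sub {r : ℝ} (hr : r ∈ Ioo (0 : ℝ) 1) (y0 : XT) : cylW r y0 ⊆ ballB r y0 := by
  intro p hp
  refine ⟨hp.1.trans ?_, hp.2⟩
  nlinarith [hr.1, hr.2]

lemma cylW_nhds {r : ℝ} (hr : 0 < r) (y0 : XT) : cylW r y0 ∈ nhds y0 := by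
  have c1 : Continuous fun p : XT => |p.1 - y0.1| := by fun_prop
  have c2 : ∀ i, Continuous fun p : XT => |p.2 i - y0.2 i| := fun i => by fun_prop
  have a1 : ∀ᶠ p in nhds y0, |p.1 - y0.1| < r ^ 2 :=
    c1.continuousAt.eventually_lt continuousAt_const (by simp; positivity)
  have a2 : ∀ᶠ p in nhds y0, ∀ i, |p.2 i - y0.2 i| < r :=
    Filter.eventually_all.2 fun i =>
      (c2 i).continuousAt.eventually_lt continuousAt_const (by simpa using hr)
  filter_upwards [a1, a2] with p b1 b2
  exact ⟨b1.le, fun i => (b2 i).le⟩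

/-- Property (P), Section 5.3: local unique continuation for the
transformed adjoint system.  Consider, near a point `y⁰ = (t⁰,x⁰)` with
`0 < x₃⁰ < 1`, the system `∂_t ψ + Δψ + div(ψv) = w₃`, `−Δw + Aq = ψ A T`,
`A*w = 0`, where `A f = R∇f` for a constant orthogonal matrix `R` and
`A* z = −div(Rᵗ z)`, with smooth data `v, T`.  For any smooth `σ` with
`σ(y⁰) = 0` and `∇_x σ(y⁰) ≠ 0` there are `ε, r ∈ (0,1)` such that if `ψ` vanishes
on `{σ < 0} ∩ W_r(y⁰)` then `ψ ≡ 0` on `B_ε(y⁰)`. -/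
theorem statement15
    (R : Matrix (Fin 3) (Fin 3) ℝ) (hR : R * R.transpose = 1)
    (v : Fin 3 → ℝ × E3 → ℝ) (T : ℝ × E3 → ℝ)
    (hv : ∀ i, ContDiff ℝ (⊤ : ℕ∞) (v i)) (hT : ContDiff ℝ (⊤ : ℕ∞) T)
    (y0 : ℝ × E3) (hy0 : y0.2 2 ∈ Ioo (0 : ℝ) 1)
    (U : Set (ℝ × E3)) (hU : U ∈ nhds y0) (hUopen : IsOpen U)
    (ψ q : ℝ × E3 → ℝ) (w : Fin 3 → ℝ × E3 → ℝ)
    (hψ : ContDiffOn ℝ (⊤ : ℕ∞) ψ U) (hq : ContDiffOn ℝ (⊤ : ℕ∞) q U)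
    (hw : ∀ i, ContDiffOn ℝ (⊤ : ℕ∞) (w i) U)
    -- `∂_t ψ + Δψ + div(ψ v) = w₃` on `U`
    (heq1 : ∀ p ∈ U,
      pdt ψ p + laplx ψ p + (∑ i : Fin 3, pdx i (fun r => ψ r * v i r) p) = w 2 p)
    -- `−Δw + A q = ψ A T` on `U`, `A f = R ∇f`
    (heq2 : ∀ p ∈ U, ∀ i : Fin 3,
      -laplx (w i) p + (∑ j : Fin 3, R i j * pdx j q p)
        = ψ p * ∑ j : Fin 3, R i j * pdx j T p)
    -- `A* w = −div(Rᵗ w) = 0` on `U`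
    (heq3 : ∀ p ∈ U,
      (∑ i : Fin 3, pdx i (fun r => ∑ j : Fin 3, R j i * w j r) p) = 0)
    -- the hypersurface `{σ = 0}`
    (σf : ℝ × E3 → ℝ) (hσf : ContDiff ℝ (⊤ : ℕ∞) σf) (hσ0 : σf y0 = 0)
    (hσgrad : ∃ i : Fin 3, pdx i σf y0 ≠ 0) :
    ∃ ε ∈ Ioo (0 : ℝ) 1, ∃ r ∈ Ioo (0 : ℝ) 1,
      cylW r y0 ⊆ U ∧ ballB ε y0 ⊆ U ∧
      ((∀ p ∈ cylW r y0, σf p < 0 → ψ p = 0) →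
        ∀ p ∈ ballB ε y0, ψ p = 0) := by
  have hy : y0 ∈ U := mem_of_mem_nhds hU
  obtain ⟨r, hr, hrU⟩ := ballB_basis hU
  have hcU : cylW r y0 ⊆ U := (cylW_sub hr y0).trans hrU
  by_cases hvan : ∀ p ∈ cylW r y0, σf p < 0 → ψ p = 0
  · have key : ∀ᶠ p in nhds y0, ψ p = 0 := by
      refine uc_sys R hR hv hT hUopen hy hψ hq hw ?_ ?_ ?_ hσf hσ0 ?_ ?_
      · intro p hp
        rw [Pk_eq 1 hUopen hψ hp, ← heq1 p hp]
        have : ∀ i, pdx i (fun r => ψ r * v i r) p = DD (ex i) (ψ * v i) p := fun i =>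
          pdx_eq (con_dat hUopen (hψ.mul (hv i).contDiffOn) hp) i
        simp only [this]
        ring
      · intro p hp i
        rw [Pk_eq 0 hUopen (hw i) hp]
        have h := heq2 p hp i
        simp only [pdx_eq (con_dat hUopen hq hp), pdx_eq (Smo.dat hT p)] at h
        simp only [lin]
        linarith
      · intro p hp
        have h := heq3 p hp
        have : ∀ i, pdx i (fun r => ∑ j : Fin 3, R j i * w j r) p
            = DD (ex i) (lin (fun j => R j i) w) p := fun i =>
          pdx_eq (con_dat hUopen (lin_on hw) hp) i
        simpa only [this] using h
      · obtain ⟨i, hi⟩ := hσgrad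
        exact ⟨i, by rwa [pdx_eq (Smo.dat hσf y0)] at hi⟩
      · filter_upwards [cylW_nhds hr.1 y0] with p hp
        exact hvan p hp
    obtain ⟨ε, hε, hεs⟩ := ballB_basis (Filter.inter_mem hU key)
    exact ⟨ε, hε, r, hr, hcU, fun p hp => (hεs hp).1, fun _ p hp => (hεs hp).2⟩
  · exact ⟨r, hr, r, hr, hcU, hrU, fun h => absurd h hvan⟩
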